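/- Let n ∈ ℕ, n ≥ 2, and c ∈ ℝ. The operator T₂(c) = (Δ² + c|x|⁻⁴) with domain C₀^∞(ℝⁿ∖{0}) is essentially self-adjoint in L²(ℝⁿ; dⁿx) if and only if c ≥ 3(n+2)(6−n) when 2 ≤ n ≤ 5, and c ≥ −n(n+4)(n−4)(n−8)/16 when n ≥ 6. -/

import Mathlib

open MeasureTheory

noncomputable section

/-- A densely defined operator `T` in a complex Hilbert space is *essentially self-adjoint*
if its adjoint `T*` is self-adjoint (equivalently, its closure is self-adjoint). -/
def EssentiallySelfAdjoint {H : Type*} [NormedAddCommGroup H] [InnerProductSpace ℂ H]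
    [CompleteSpace H] (T : H →ₗ.[ℂ] H) : Prop :=
  Dense (T.domain : Set H) ∧ IsSelfAdjoint T.adjoint

/-- The Laplacian of `f : ℝⁿ → ℂ`. -/
def laplacian {n : ℕ} (f : EuclideanSpace ℝ (Fin n) → ℂ) (x : EuclideanSpace ℝ (Fin n)) : ℂ :=
  ∑ i : Fin n, fderiv ℝ (fun y => fderiv ℝ f y (EuclideanSpace.single i (1:ℝ))) x
    (EuclideanSpace.single i (1:ℝ))

/-- The graph of the operator given by the formal differential expression `L` with domain
`C₀^∞(ℝⁿ \ {0})`, as a subspace of `L²(ℝⁿ) × L²(ℝⁿ)`. -/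
def graphOf (n : ℕ) (L : (EuclideanSpace ℝ (Fin n) → ℂ) → (EuclideanSpace ℝ (Fin n) → ℂ)) :
    Submodule ℂ (Lp ℂ 2 (volume : Measure (EuclideanSpace ℝ (Fin n))) ×
      Lp ℂ 2 (volume : Measure (EuclideanSpace ℝ (Fin n)))) :=
  Submodule.span ℂ {p | ∃ φ : EuclideanSpace ℝ (Fin n) → ℂ,
    ContDiff ℝ (⊤ : ℕ∞) φ ∧ HasCompactSupport φ ∧ (0 : EuclideanSpace ℝ (Fin n)) ∉ tsupport φ ∧
    (p.1 : EuclideanSpace ℝ (Fin n) → ℂ) =ᵐ[volume] φ ∧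
    (p.2 : EuclideanSpace ℝ (Fin n) → ℂ) =ᵐ[volume] L φ}

/-- The operator in `L²(ℝⁿ)` given by the formal differential expression `L` with domain
`C₀^∞(ℝⁿ \ {0})`. -/
def opOn (n : ℕ) (L : (EuclideanSpace ℝ (Fin n) → ℂ) → (EuclideanSpace ℝ (Fin n) → ℂ)) :
    Lp ℂ 2 (volume : Measure (EuclideanSpace ℝ (Fin n))) →ₗ.[ℂ]
      Lp ℂ 2 (volume : Measure (EuclideanSpace ℝ (Fin n))) :=
  (graphOf n L).toLinearPMap

/-- The operator `Δ² + c|x|⁻⁴` with domain `C₀^∞(ℝⁿ \ {0})` in `L²(ℝⁿ)`. -/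
def T2op (n : ℕ) (c : ℝ) :
    Lp ℂ 2 (volume : Measure (EuclideanSpace ℝ (Fin n))) →ₗ.[ℂ]
      Lp ℂ 2 (volume : Measure (EuclideanSpace ℝ (Fin n))) :=
  opOn n (fun φ x => laplacian (laplacian φ) x + ((c * (‖x‖ ^ 4)⁻¹ : ℝ) : ℂ) * φ x)

/-!
In the coordinate `s = log ‖x‖`, and after conjugation with powers of `‖x‖`, the operator
`Δ² + c ‖x‖⁻⁴` acts on the functions `⟨a, x⟩ ^ k ψ(log ‖x‖)`, up to lower powers of `⟨a, x⟩`, as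
`‖x‖⁻⁴` times a constant coefficient operator with characteristic polynomial
`(z² + A)² - 4 z² + c`, where `A = N (4 - N) / 4` and `N = n + 2 k`. The condition on `c` says that
for no `k` this polynomial has a root with `|Re z| < 2`; the sector `k = 0` is the decisive one.

If there are no such roots, let `w ∈ L²` be a distributional solution of
`(Δ² + c ‖x‖⁻⁴) w = ± i w`. By induction on `k`, its pairings with `⟨a, x⟩ ^ k ψ(log ‖x‖)` are
weak solutions of the one-dimensional equation, which a mollified integration by parts shows to be
trivial. These pairings are the Taylor coefficients of the Fourier transforms of the radial cutoffs
`ψ(log ‖x‖) w`, so `w = 0`; the Fourier transform takes the place of spherical harmonics.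

If `z` is a root with `|Re z| < 2` in the sector `k = 0`, then so is `-z`, and the corresponding
radial solutions (with a factor `log ‖x‖` at a double root), cut off to vanish for `‖x‖ ≥ 1`, are
square integrable together with their images. Their boundary form does not vanish, which is
incompatible with a self-adjoint adjoint.
-/

open Filter Topology Asymptotics
open ContinuousLinearMap (lsmul)
open scoped ContDiff ENNReal ComplexConjugate InnerProductSpace Convolution

local notation "𝔼" n:max => EuclideanSpace ℝ (Fin n)

local notation "L²(" n ")" => Lp ℂ 2 (volume : Measure (EuclideanSpace ℝ (Fin n)))

section LinearODE

variable {z : ℂ} {w f : ℝ → ℂ} {β : ℝ}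

lemma norm_mul_exp_le_of_hasDerivAt {r s M : ℝ} (hzβ : 0 < z.re + β)
    (hw : ∀ t, HasDerivAt w (f t - z * w t) t) (hrs : r ≤ s)
    (hf : ∀ t ∈ Set.Icc r s, ‖f t‖ ≤ M * Real.exp (β * t)) :
    ‖w s‖ * Real.exp (z.re * s) ≤
      ‖w r‖ * Real.exp (z.re * r) + M / (z.re + β) * Real.exp ((z.re + β) * s) := by
  have hM : 0 ≤ M := nonneg_of_mul_nonneg_left
    ((norm_nonneg _).trans (hf r (Set.left_mem_Icc.2 hrs))) (Real.exp_pos _)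
  have norm_cexp (t : ℝ) : ‖Complex.exp (z * t)‖ = Real.exp (z.re * t) := by
    simp [Complex.norm_exp]
  have hasDerivAt_cexp_mul (t : ℝ) :
      HasDerivAt (fun t : ℝ => Complex.exp (z * t) * w t) (Complex.exp (z * t) * f t) t := by
    refine ((((Complex.ofRealCLM.hasDerivAt (x := t)).const_mul z).cexp).mul (hw t)).congr_deriv ?_
    simp only [Complex.ofRealCLM_apply, Complex.ofReal_one]
    ring
  have hasDerivAt_bound (t : ℝ) : HasDerivAt (fun t : ℝ => ‖w r‖ * Real.exp (z.re * r) +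
      M / (z.re + β) * Real.exp ((z.re + β) * t)) (M * Real.exp ((z.re + β) * t)) t := by
    refine ((((hasDerivAt_id t).const_mul (z.re + β)).exp.const_mul _).const_add _).congr_deriv ?_
    simp only [id_eq]
    field_simp
  have norm_le_bound := image_norm_le_of_norm_deriv_right_le_deriv_boundary
    (fun t _ => (hasDerivAt_cexp_mul t).continuousAt.continuousWithinAt)
    (fun t _ => (hasDerivAt_cexp_mul t).hasDerivWithinAt)
    (by
      rw [norm_mul, norm_cexp, mul_comm]
      exact le_add_of_nonneg_right (by positivity)) hasDerivAt_bound
    (fun t ht => by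
      rw [norm_mul, norm_cexp, add_mul, Real.exp_add, mul_left_comm]
      gcongr
      exact hf t ⟨ht.1, ht.2.le⟩)
    (Set.right_mem_Icc.2 hrs)
  simpa only [norm_mul, norm_cexp, mul_comm] using norm_le_bound

lemma isLittleO_exp_atTop_of_hasDerivAt (hzβ : 0 < z.re + β)
    (hw : ∀ t, HasDerivAt w (f t - z * w t) t)
    (hf : f =o[atTop] fun t => Real.exp (β * t)) : w =o[atTop] fun t => Real.exp (β * t) := by
  refine isLittleO_iff.2 fun ε hε => ?_
  obtain ⟨a, ha⟩ := eventually_atTop.1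
    (isLittleO_iff.1 hf (c := ε / 2 * (z.re + β)) (by positivity))
  simp only [Real.norm_of_nonneg (Real.exp_pos _).le] at ha ⊢
  have exp_large : Tendsto (fun s => ε / 2 * Real.exp ((z.re + β) * s)) atTop atTop :=
    (Real.tendsto_exp_atTop.comp (tendsto_id.const_mul_atTop hzβ)).const_mul_atTop (half_pos hε)
  filter_upwards [eventually_ge_atTop a,
    exp_large.eventually_ge_atTop (‖w a‖ * Real.exp (z.re * a))] with s hs hlarge
  have hle := norm_mul_exp_le_of_hasDerivAt hzβ hw hs fun t ht => ha t ht.1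
  rw [mul_div_cancel_right₀ _ hzβ.ne'] at hle
  refine le_of_mul_le_mul_right ?_ (Real.exp_pos (z.re * s))
  calc ‖w s‖ * Real.exp (z.re * s) ≤ ε * Real.exp ((z.re + β) * s) := by linarith
    _ = ε * Real.exp (β * s) * Real.exp (z.re * s) := by rw [add_mul, Real.exp_add]; ring

lemma isLittleO_exp_atBot_of_hasDerivAt (hzβ : 0 < z.re + β)
    (hw : ∀ t, HasDerivAt w (f t - z * w t) t) (hw_bot : w =o[atBot] fun t => Real.exp (-z.re * t))
    (hf : f =o[atBot] fun t => Real.exp (β * t)) : w =o[atBot] fun t => Real.exp (β * t) := by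
  refine isLittleO_iff.2 fun ε hε => ?_
  obtain ⟨a, ha⟩ := eventually_atBot.1 (isLittleO_iff.1 hf (c := ε * (z.re + β)) (by positivity))
  simp only [Real.norm_of_nonneg (Real.exp_pos _).le] at ha ⊢
  have initial_tendsto : Tendsto (fun r => ‖w r‖ * Real.exp (z.re * r)) atBot (𝓝 0) := by
    refine (isLittleO_one_iff ℝ).1 ?_
    refine (hw_bot.norm_left.mul_isBigO (isBigO_refl _ _)).congr_right fun r => ?_
    rw [← Real.exp_add, neg_mul, neg_add_cancel, Real.exp_zero]
  filter_upwards [eventually_le_atBot a] with s hs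
  have hle : ‖w s‖ * Real.exp (z.re * s) ≤ 0 + ε * Real.exp ((z.re + β) * s) := by
    refine ge_of_tendsto (initial_tendsto.add_const _) ?_
    filter_upwards [eventually_le_atBot s] with r hr
    have := norm_mul_exp_le_of_hasDerivAt hzβ hw hr fun t ht => ha t (ht.2.trans hs)
    rwa [mul_div_cancel_right₀ _ hzβ.ne'] at this
  refine le_of_mul_le_mul_right ?_ (Real.exp_pos (z.re * s))
  calc ‖w s‖ * Real.exp (z.re * s) ≤ ε * Real.exp ((z.re + β) * s) := by rwa [zero_add] at hle
    _ = ε * Real.exp (β * s) * Real.exp (z.re * s) := by rw [add_mul, Real.exp_add]; ring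

lemma isLittleO_exp_cocompact_of_hasDerivAt (hβ : 0 < β) (hz : β ≤ z.re)
    (hw : ∀ t, HasDerivAt w (f t - z * w t) t)
    (hw_decay : w =o[cocompact ℝ] fun t => Real.exp (-β * t))
    (hf : f =o[cocompact ℝ] fun t => Real.exp (β * t)) :
    w =o[cocompact ℝ] fun t => Real.exp (β * t) := by
  rw [cocompact_eq_atBot_atTop, isLittleO_sup] at hf hw_decay ⊢
  refine ⟨isLittleO_exp_atBot_of_hasDerivAt (by linarith) hw (hw_decay.1.trans_isBigO ?_) hf.1,
    isLittleO_exp_atTop_of_hasDerivAt (by linarith) hw hf.2⟩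
  refine IsBigO.of_bound' ?_
  filter_upwards [eventually_le_atBot (0 : ℝ)] with t ht
  simp only [Real.norm_of_nonneg (Real.exp_pos _).le, Real.exp_le_exp]
  nlinarith

end LinearODE

/-- `g` lists a function on the line together with its successive derivatives. -/
def IsJet (g : ℕ → ℝ → ℂ) : Prop :=
  ∀ k s, HasDerivAt (g k) (g (k + 1) s) s

/-- The action of `D² + p D + q`, `D = d/ds`, on a list of successive derivatives. -/
def quadraticOp (p q : ℝ) (g : ℕ → ℝ → ℂ) (k : ℕ) (s : ℝ) : ℂ :=
  g (k + 2) s + p * g (k + 1) s + q * g k s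

section QuadraticOp

variable {p q β : ℝ} {z₁ z₂ : ℂ} {g : ℕ → ℝ → ℂ}

lemma IsJet.continuous (hg : IsJet g) (k : ℕ) : Continuous (g k) :=
  continuous_iff_continuousAt.2 fun s => (hg k s).continuousAt

lemma IsJet.isJet_quadraticOp (hg : IsJet g) (p q : ℝ) : IsJet (quadraticOp p q g) := fun k s =>
  ((hg (k + 2) s).add ((hg (k + 1) s).const_mul _)).add ((hg k s).const_mul _)

lemma quadraticOp_quadraticOp_neg (p q : ℝ) (g : ℕ → ℝ → ℂ) (s : ℝ) :
    quadraticOp p q (quadraticOp (-p) q g) 0 s =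
      g 4 s + (2 * q - p ^ 2) * g 2 s + q ^ 2 * g 0 s := by
  simp only [quadraticOp, Complex.ofReal_neg, zero_add]
  ring

lemma isLittleO_quadraticOp {l : Filter ℝ} {φ : ℝ → ℝ} (hg : ∀ k, g k =o[l] φ) (p q : ℝ) (k : ℕ) :
    quadraticOp p q g k =o[l] φ :=
  ((hg (k + 2)).add ((hg (k + 1)).const_mul_left _)).add ((hg k).const_mul_left _)

lemma IsJet.isLittleO_exp_of_quadraticOp (hg : IsJet g) (hβ : 0 < β) (h₁ : β ≤ z₁.re)
    (h₂ : β ≤ z₂.re) (hp : z₁ + z₂ = p) (hq : z₁ * z₂ = q)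
    (hdecay : ∀ k, g k =o[cocompact ℝ] fun s => Real.exp (-β * s))
    (hgrowth : quadraticOp p q g 0 =o[cocompact ℝ] fun s => Real.exp (β * s)) :
    (fun s => g 1 s + z₂ * g 0 s) =o[cocompact ℝ] (fun s => Real.exp (β * s)) ∧
      g 0 =o[cocompact ℝ] fun s => Real.exp (β * s) := by
  have outer : (fun s => g 1 s + z₂ * g 0 s) =o[cocompact ℝ] fun s => Real.exp (β * s) := by
    refine isLittleO_exp_cocompact_of_hasDerivAt hβ h₁ (fun s => ?_)
      ((hdecay 1).add ((hdecay 0).const_mul_left z₂)) hgrowth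
    refine ((hg 1 s).add ((hg 0 s).const_mul z₂)).congr_deriv ?_
    simp only [quadraticOp, ← hp, ← hq]
    ring
  refine ⟨outer, isLittleO_exp_cocompact_of_hasDerivAt hβ h₂ (fun s => ?_) (hdecay 0) outer⟩
  exact (hg 0 s).congr_deriv (by ring)

lemma tendsto_conj_mul_of_isLittleO_exp {l : Filter ℝ} {f h : ℝ → ℂ}
    (hf : f =o[l] fun s => Real.exp (-β * s)) (hh : h =o[l] fun s => Real.exp (β * s)) :
    Tendsto (fun s => conj (f s) * h s) l (𝓝 0) := by
  have hf_conj : (fun s => conj (f s)) =o[l] fun s => Real.exp (-β * s) :=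
    (hf.norm_left.congr_left fun s => (RCLike.norm_conj (f s)).symm).of_norm_left
  refine (isLittleO_one_iff ℝ).1 ((hf_conj.mul hh).congr_right fun s => ?_)
  rw [neg_mul, ← Real.exp_add, neg_add_cancel, Real.exp_zero]

/-- The boundary term in the integration by parts moving `D² + p D + q` onto the conjugate factor,
where `z₁ + z₂ = p` and `z₁ z₂ = q`; `g` is the first factor and `G` the second one. -/
def boundaryTerm (z₁ z₂ : ℂ) (g G : ℕ → ℝ → ℂ) (s : ℝ) : ℂ :=
  conj (g 0 s) * (G 1 s + z₂ * G 0 s) - conj (g 1 s - conj z₁ * g 0 s) * G 0 s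

lemma IsJet.hasDerivAt_boundaryTerm {G : ℕ → ℝ → ℂ} (hg : IsJet g) (hG : IsJet G)
    (hp : z₁ + z₂ = p) (hq : z₁ * z₂ = q) (s : ℝ) :
    HasDerivAt (boundaryTerm z₁ z₂ g G)
      (conj (g 0 s) * quadraticOp p q G 0 s - conj (quadraticOp (-p) q g 0 s) * G 0 s) s := by
  refine (((hg 0 s).star.mul ((hG 1 s).add ((hG 0 s).const_mul z₂))).sub
    (((hg 1 s).sub ((hg 0 s).const_mul (conj z₁))).star.mul (hG 0 s))).congr_deriv ?_
  simp only [quadraticOp, Pi.add_apply, Pi.sub_apply, ← starRingEnd_apply, map_add, map_sub,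
    map_mul, Complex.ofReal_neg, map_neg, Complex.conj_ofReal, Complex.conj_conj, zero_add,
    Nat.reduceAdd]
  rw [← hp, ← hq]
  ring

lemma IsJet.tendsto_boundaryTerm (hg : IsJet g) (hβ : 0 < β) (h₁ : β ≤ z₁.re) (h₂ : β ≤ z₂.re)
    (hp : z₁ + z₂ = p) (hq : z₁ * z₂ = q)
    (hdecay : ∀ k, g k =o[cocompact ℝ] fun s => Real.exp (-β * s))
    (hgrowth : quadraticOp p q (quadraticOp (-p) q g) 0 =o[cocompact ℝ] fun s => Real.exp (β * s)) :
    Tendsto (boundaryTerm z₁ z₂ g (quadraticOp (-p) q g)) (cocompact ℝ) (𝓝 0) := by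
  obtain ⟨hG₁, hG₀⟩ := (hg.isJet_quadraticOp (-p) q).isLittleO_exp_of_quadraticOp hβ h₁ h₂ hp hq
    (isLittleO_quadraticOp hdecay (-p) q) hgrowth
  rw [show (0 : ℂ) = 0 - 0 by rw [sub_zero]]
  exact (tendsto_conj_mul_of_isLittleO_exp (hdecay 0) hG₁).sub
    (tendsto_conj_mul_of_isLittleO_exp ((hdecay 1).sub ((hdecay 0).const_mul_left (conj z₁))) hG₀)

/- Formally `⟨g, (D² + pD + q)(D² - pD + q)g⟩ = ‖(D² - pD + q)g‖²` is real, and the decay kills the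
boundary terms. -/
lemma IsJet.tendsto_integral_im (hg : IsJet g) (hβ : 0 < β) (h₁ : β ≤ z₁.re)
    (h₂ : β ≤ z₂.re) (hp : z₁ + z₂ = p) (hq : z₁ * z₂ = q)
    (hdecay : ∀ k, g k =o[cocompact ℝ] fun s => Real.exp (-β * s))
    (hgrowth : quadraticOp p q (quadraticOp (-p) q g) 0 =o[cocompact ℝ] fun s => Real.exp (β * s)) :
    Tendsto (fun R => ∫ s in (-R)..R,
      (conj (g 0 s) * quadraticOp p q (quadraticOp (-p) q g) 0 s).im) atTop (𝓝 0) := by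
  set B := boundaryTerm z₁ z₂ g (quadraticOp (-p) q g)
  have hG := hg.isJet_quadraticOp (-p) q
  have hasDerivAt_im (s : ℝ) : HasDerivAt (fun s => (B s).im)
      (conj (g 0 s) * quadraticOp p q (quadraticOp (-p) q g) 0 s).im s := by
    refine (Complex.imCLM.hasFDerivAt.comp_hasDerivAt s
      (hg.hasDerivAt_boundaryTerm hG hp hq s)).congr_deriv ?_
    rw [Complex.imCLM_apply, Complex.sub_im, Complex.conj_mul', ← Complex.ofReal_pow,
      Complex.ofReal_im, sub_zero]
  have continuous_integrand : Continuous fun s =>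
      (conj (g 0 s) * quadraticOp p q (quadraticOp (-p) q g) 0 s).im :=
    Complex.continuous_im.comp ((Complex.continuous_conj.comp (hg.continuous 0)).mul
      ((hG.isJet_quadraticOp p q).continuous 0))
  have tendsto_im : Tendsto (fun s => (B s).im) (cocompact ℝ) (𝓝 0) :=
    (Complex.continuous_im.tendsto 0).comp
      (hg.tendsto_boundaryTerm hβ h₁ h₂ hp hq hdecay hgrowth)
  rw [cocompact_eq_atBot_atTop, tendsto_sup] at tendsto_im
  rw [show (0 : ℝ) = 0 - 0 by rw [sub_zero]]
  refine (tendsto_im.2.sub (tendsto_im.1.comp tendsto_neg_atTop_atBot)).congr fun R => ?_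
  exact (intervalIntegral.integral_eq_sub_of_hasDerivAt (fun s _ => hasDerivAt_im s)
    (continuous_integrand.intervalIntegrable _ _)).symm

end QuadraticOp

lemma sq_lintegral_mul_le {α : Type*} [MeasurableSpace α] {ν : Measure α} {φ f : α → ℝ≥0∞}
    (hφ : AEMeasurable φ ν) (hf : AEMeasurable f ν) :
    (∫⁻ a, φ a * f a ∂ν) ^ 2 ≤ (∫⁻ a, φ a ∂ν) * ∫⁻ a, φ a * f a ^ 2 ∂ν := by
  have sqrt_mul_sqrt (x : ℝ≥0∞) : x ^ (1 / 2 : ℝ) * x ^ (1 / 2 : ℝ) = x := by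
    rw [← ENNReal.rpow_add_of_nonneg _ _ (by norm_num) (by norm_num)]; norm_num
  have sq_sqrt (x : ℝ≥0∞) : (x ^ (1 / 2 : ℝ)) ^ 2 = x := by rw [sq, sqrt_mul_sqrt]
  have cauchy_schwarz := ENNReal.lintegral_mul_le_Lp_mul_Lq ν Real.HolderConjugate.two_two
    (hφ.pow_const (1 / 2 : ℝ)) ((hφ.pow_const (1 / 2 : ℝ)).mul hf)
  simp only [Pi.mul_apply, ← mul_assoc, sqrt_mul_sqrt, ENNReal.rpow_two, mul_pow, sq_sqrt]
    at cauchy_schwarz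
  calc _ ≤ _ := pow_le_pow_left₀ zero_le cauchy_schwarz 2
    _ = _ := by rw [mul_pow, sq_sqrt, sq_sqrt]

lemma eLpNorm_two_sq {α F : Type*} [MeasurableSpace α] {ν : Measure α} [NormedAddCommGroup F]
    (f : α → F) : eLpNorm f 2 ν ^ 2 = ∫⁻ a, ‖f a‖ₑ ^ 2 ∂ν := by
  simpa using eLpNorm_nnreal_pow_eq_lintegral (f := f) (μ := ν) (two_ne_zero (α := NNReal))

section Convolution

variable {G E : Type*} [NormedAddCommGroup G] [MeasurableSpace G] [BorelSpace G]
  [SecondCountableTopology G] [LocallyCompactSpace G] {μ : Measure G} [μ.IsAddHaarMeasure]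
  [NormedAddCommGroup E] {Φ : G → ℝ} {K : G → E}

lemma tendsto_eLpNorm_translate_sub {p : ℝ≥0∞} [Fact (1 ≤ p)] (hp : p ≠ ⊤) (hK : MemLp K p μ) :
    Tendsto (fun t => eLpNorm (fun s => K (s - t) - K s) p μ) (𝓝 0) (𝓝 0) := by
  have : Fact (p ≠ ⊤) := ⟨hp⟩
  have continuous_translate : Continuous fun t : G =>
      (DomAddAct.mk (-t) +ᵥ hK.toLp : Lp E p μ) := by fun_prop
  refine (tendsto_iff_edist_tendsto_0.1 (continuous_translate.tendsto 0)).congr fun t => ?_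
  rw [neg_zero, Lp.edist_def]
  refine eLpNorm_congr_ae ?_
  filter_upwards [DomAddAct.vadd_Lp_ae_eq (DomAddAct.mk (-t)) hK.toLp,
    DomAddAct.vadd_Lp_ae_eq (DomAddAct.mk (0 : G)) hK.toLp, hK.coeFn_toLp,
    (measurePreserving_add_left μ (-t)).quasiMeasurePreserving.ae hK.coeFn_toLp]
    with s translate_t translate_zero toLp_s toLp_sub
  simp only [Pi.sub_apply, translate_t, translate_zero, Equiv.symm_apply_apply, vadd_eq_add,
    zero_add, toLp_s]
  rw [toLp_sub, neg_add_eq_sub]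

variable [NormedSpace ℝ E]

lemma enorm_convolution_le {p q : ℝ≥0∞} [p.HolderConjugate q] (hΦ : AEStronglyMeasurable Φ μ)
    (hK : AEStronglyMeasurable K μ) (s : G) :
    ‖(Φ ⋆[lsmul ℝ ℝ, μ] K) s‖ₑ ≤ eLpNorm Φ p μ * eLpNorm K q μ := by
  have measurePreserving := Measure.measurePreserving_sub_left μ s
  have holder := eLpNorm_smul_le_mul_eLpNorm (p := p) (q := q) (r := 1) hK
    (hΦ.comp_measurePreserving measurePreserving)
  rw [eLpNorm_comp_measurePreserving hΦ measurePreserving, eLpNorm_one_eq_lintegral_enorm] at holder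
  rw [convolution_eq_swap]
  exact (enorm_integral_le_lintegral_enorm _).trans holder

lemma tendsto_convolution_cocompact (p : ℝ≥0∞) {q : ℝ≥0∞} [p.HolderConjugate q] (hq : q ≠ ⊤)
    (hΦ : Continuous Φ) (hΦc : HasCompactSupport Φ) (hK : MemLp K q μ) :
    Tendsto (Φ ⋆[lsmul ℝ ℝ, μ] K) (cocompact G) (𝓝 0) := by
  set C := eLpNorm Φ p μ
  have hC : C ≠ ⊤ := (hΦ.memLp_of_hasCompactSupport hΦc).eLpNorm_lt_top.ne
  rw [tendsto_zero_iff_enorm_tendsto_zero, ENNReal.tendsto_nhds_zero]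
  intro ε hε
  obtain ⟨K', hK'c, hK'_close, -, hK'⟩ :=
    hK.exists_hasCompactSupport_eLpNorm_sub_le hq (ε := ε / (C + 1))
      (by simp [ENNReal.div_eq_zero_iff, hε.ne', hC])
  have convolutionExists {L : G → E} (hL : MemLp L q μ) :=
    hΦc.convolutionExists_left (lsmul ℝ ℝ) hΦ
      (hL.locallyIntegrable (ENNReal.HolderConjugate.one_le q p))
  have compact_convolution := hΦc.convolution (lsmul ℝ ℝ) hK'c (μ := μ)
  filter_upwards [compact_convolution.isCompact.compl_mem_cocompact] with s hs
  have eq_sub : (Φ ⋆[lsmul ℝ ℝ, μ] K) s = (Φ ⋆[lsmul ℝ ℝ, μ] (K - K')) s := by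
    rw [← sub_zero ((Φ ⋆[lsmul ℝ ℝ, μ] K) s), ← image_eq_zero_of_notMem_tsupport hs]
    simp only [convolution_def, Pi.sub_apply, map_sub]
    exact (integral_sub (convolutionExists hK s) (convolutionExists hK' s)).symm
  rw [eq_sub]
  calc _ ≤ C * eLpNorm (K - K') q μ :=
        enorm_convolution_le hΦ.aestronglyMeasurable (hK.sub hK').aestronglyMeasurable s
    _ ≤ (C + 1) * (ε / (C + 1)) := by gcongr; exact le_self_add
    _ ≤ ε := ENNReal.mul_div_le

lemma enorm_convolution_sub_sq_le [CompleteSpace E] (hΦ : Continuous Φ) (hΦc : HasCompactSupport Φ)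
    (hK : MemLp K 2 μ) (s : G) :
    ‖(Φ ⋆[lsmul ℝ ℝ, μ] K) s - (∫ t, Φ t ∂μ) • K s‖ₑ ^ 2 ≤
      (∫⁻ t, ‖Φ t‖ₑ ∂μ) * ∫⁻ t, ‖Φ t‖ₑ * ‖K (s - t) - K s‖ₑ ^ 2 ∂μ := by
  have integrable_smul : Integrable (fun t => Φ t • K (s - t)) μ :=
    hΦc.convolutionExists_left (lsmul ℝ ℝ) hΦ (hK.locallyIntegrable one_le_two) s
  have sub_eq : (Φ ⋆[lsmul ℝ ℝ, μ] K) s - (∫ t, Φ t ∂μ) • K s =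
      ∫ t, Φ t • (K (s - t) - K s) ∂μ := by
    simp only [smul_sub]
    rw [integral_sub integrable_smul ((hΦ.integrable_of_hasCompactSupport hΦc).smul_const _),
      integral_smul_const]
    rfl
  have measurable_translate : AEMeasurable (fun t => ‖K (s - t) - K s‖ₑ) μ :=
    ((hK.aestronglyMeasurable.comp_measurePreserving
      (Measure.measurePreserving_sub_left μ s)).sub aestronglyMeasurable_const).enorm
  refine le_trans ?_ (sq_lintegral_mul_le hΦ.aestronglyMeasurable.enorm measurable_translate)
  rw [sub_eq]
  gcongr
  refine (enorm_integral_le_lintegral_enorm _).trans_eq ?_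
  simp only [enorm_smul]

lemma eLpNorm_convolution_sub_le [CompleteSpace E] (hΦ : Continuous Φ) (hΦc : HasCompactSupport Φ)
    (hK : MemLp K 2 μ) {η : ℝ≥0∞}
    (hη : ∀ t ∈ tsupport Φ, eLpNorm (fun s => K (s - t) - K s) 2 μ ≤ η) :
    eLpNorm (Φ ⋆[lsmul ℝ ℝ, μ] K - (∫ t, Φ t ∂μ) • K) 2 μ ≤ (∫⁻ t, ‖Φ t‖ₑ ∂μ) * η := by
  have measurable_integrand : AEMeasurable
      (Function.uncurry fun s t => ‖Φ t‖ₑ * ‖K (s - t) - K s‖ₑ ^ 2) (μ.prod μ) :=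
    hΦ.aestronglyMeasurable.comp_snd.enorm.mul
      (((hK.aestronglyMeasurable.comp_quasiMeasurePreserving
        (quasiMeasurePreserving_sub_of_right_invariant μ μ)).sub
        hK.aestronglyMeasurable.comp_fst).enorm.pow_const 2)
  refine (ENNReal.pow_right_strictMono two_ne_zero).le_iff_le.1 ?_
  rw [eLpNorm_two_sq]
  calc _ ≤ ∫⁻ s, (∫⁻ t, ‖Φ t‖ₑ ∂μ) * ∫⁻ t, ‖Φ t‖ₑ * ‖K (s - t) - K s‖ₑ ^ 2 ∂μ ∂μ :=
        lintegral_mono fun s => enorm_convolution_sub_sq_le hΦ hΦc hK s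
    _ = (∫⁻ t, ‖Φ t‖ₑ ∂μ) * ∫⁻ t, ∫⁻ s, ‖Φ t‖ₑ * ‖K (s - t) - K s‖ₑ ^ 2 ∂μ ∂μ := by
      rw [lintegral_const_mul' _ _ (hΦ.integrable_of_hasCompactSupport hΦc).2.ne,
        lintegral_lintegral_swap measurable_integrand]
    _ ≤ (∫⁻ t, ‖Φ t‖ₑ ∂μ) * ∫⁻ t, ‖Φ t‖ₑ * η ^ 2 ∂μ := by
      gcongr with t
      rw [lintegral_const_mul' _ _ (by simp), ← eLpNorm_two_sq]
      by_cases ht : t ∈ tsupport Φ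
      · gcongr
        exact hη t ht
      · simp [image_eq_zero_of_notMem_tsupport ht]
    _ = _ := by rw [lintegral_mul_const'' _ hΦ.aestronglyMeasurable.enorm]; ring

lemma memLp_convolution [CompleteSpace E] (hΦ : Continuous Φ) (hΦc : HasCompactSupport Φ)
    (hK : MemLp K 2 μ) : MemLp (Φ ⋆[lsmul ℝ ℝ, μ] K) 2 μ := by
  have translate_le (t : G) : eLpNorm (fun s => K (s - t) - K s) 2 μ ≤
      eLpNorm K 2 μ + eLpNorm K 2 μ := by
    have measurePreserving := measurePreserving_sub_right μ t
    refine (eLpNorm_sub_le (hK.aestronglyMeasurable.comp_measurePreserving measurePreserving)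
      hK.aestronglyMeasurable one_le_two).trans_eq ?_
    rw [eLpNorm_comp_measurePreserving hK.aestronglyMeasurable measurePreserving]
  have continuous_convolution := hΦc.continuous_convolution_left (lsmul ℝ ℝ) hΦ
    (hK.locallyIntegrable one_le_two)
  have memLp_sub : MemLp (Φ ⋆[lsmul ℝ ℝ, μ] K - (∫ t, Φ t ∂μ) • K) 2 μ :=
    ⟨continuous_convolution.aestronglyMeasurable.sub (hK.aestronglyMeasurable.const_smul _),
      (eLpNorm_convolution_sub_le hΦ hΦc hK fun t _ => translate_le t).trans_lt
        (ENNReal.mul_lt_top (hΦ.integrable_of_hasCompactSupport hΦc).2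
          (ENNReal.add_lt_top.2 ⟨hK.2, hK.2⟩))⟩
  simpa using memLp_sub.add (hK.const_smul (∫ t, Φ t ∂μ))

lemma exists_forall_eLpNorm_convolution_sub_le [CompleteSpace E] (hK : MemLp K 2 μ) {δ : ℝ}
    (hδ : 0 < δ) : ∃ ε > 0, ∀ Φ : G → ℝ, Continuous Φ → HasCompactSupport Φ →
      tsupport Φ ⊆ Metric.closedBall 0 ε → (∀ t, 0 ≤ Φ t) →
      eLpNorm (Φ ⋆[lsmul ℝ ℝ, μ] K - (∫ t, Φ t ∂μ) • K) 2 μ ≤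
        ENNReal.ofReal ((∫ t, Φ t ∂μ) * δ) := by
  obtain ⟨ε, hε, translate_le⟩ := Metric.nhds_basis_closedBall.eventually_iff.1
    (ENNReal.tendsto_nhds_zero.1 (tendsto_eLpNorm_translate_sub ENNReal.ofNat_ne_top hK)
      (ENNReal.ofReal δ) (ENNReal.ofReal_pos.2 hδ))
  refine ⟨ε, hε, fun Φ hΦ hΦc hsupp hpos => ?_⟩
  have lintegral_enorm : ∫⁻ t, ‖Φ t‖ₑ ∂μ = ENNReal.ofReal (∫ t, Φ t ∂μ) := by
    rw [ofReal_integral_eq_lintegral_ofReal (hΦ.integrable_of_hasCompactSupport hΦc)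
      (ae_of_all _ hpos)]
    exact lintegral_congr fun t => Real.enorm_of_nonneg (hpos t)
  rw [ENNReal.ofReal_mul (integral_nonneg hpos), ← lintegral_enorm]
  exact eLpNorm_convolution_sub_le hΦ hΦc hK fun t ht => translate_le (hsupp ht)

end Convolution

lemma eq_zero_of_re_inner_eq_zero {𝕜 H : Type*} [RCLike 𝕜] [NormedAddCommGroup H]
    [InnerProductSpace 𝕜 H] {a b x : H} (h : RCLike.re (inner 𝕜 a b) = 0)
    (ha : ‖a - x‖ ≤ ‖x‖ / 3) (hb : ‖b - x‖ ≤ ‖x‖ / 3) : x = 0 := by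
  have expand : inner 𝕜 a b = inner 𝕜 (a - x) b + inner 𝕜 x (b - x) + inner 𝕜 x x := by
    simp only [inner_sub_left, inner_sub_right]
    ring
  have norm_sq_eq : ‖x‖ ^ 2 =
      -RCLike.re (inner 𝕜 (a - x) b) - RCLike.re (inner 𝕜 x (b - x)) := by
    rw [expand, map_add, map_add, inner_self_eq_norm_sq] at h
    linarith
  have norm_b : ‖b‖ ≤ ‖x‖ + ‖x‖ / 3 := by
    linarith [norm_sub_norm_le b x]
  have bound_left : -RCLike.re (inner 𝕜 (a - x) b) ≤ ‖x‖ / 3 * (‖x‖ + ‖x‖ / 3) :=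
    (neg_le_abs _).trans <| (RCLike.abs_re_le_norm _).trans <| (norm_inner_le_norm _ _).trans <| by
      gcongr
  have bound_right : -RCLike.re (inner 𝕜 x (b - x)) ≤ ‖x‖ * (‖x‖ / 3) :=
    (neg_le_abs _).trans <| (RCLike.abs_re_le_norm _).trans <| (norm_inner_le_norm _ _).trans <| by
      gcongr
  have : ‖x‖ ^ 2 = 0 := by nlinarith [sq_nonneg ‖x‖]
  simpa using this

lemma norm_inv_smul_toLp_sub_le {α E : Type*} [MeasurableSpace α] {μ : Measure α}
    [NormedAddCommGroup E] [NormedSpace ℝ E] {p : ℝ≥0∞} [Fact (1 ≤ p)] {A K : α → E}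
    {c δ : ℝ} (hc : 0 < c) (hδ : 0 ≤ δ) (hA : MemLp A p μ) (hK : MemLp K p μ)
    (h : eLpNorm (A - c • K) p μ ≤ ENNReal.ofReal (c * δ)) :
    ‖c⁻¹ • hA.toLp - hK.toLp‖ ≤ δ := by
  have toLp_sub : hA.toLp - c • hK.toLp = (hA.sub (hK.const_smul c)).toLp := by
    rw [MemLp.toLp_sub hA (hK.const_smul c), MemLp.toLp_const_smul]
  have norm_sub_le : ‖hA.toLp - c • hK.toLp‖ ≤ c * δ := by
    rw [toLp_sub, Lp.norm_toLp]
    exact ENNReal.toReal_le_of_le_ofReal (by positivity) h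
  calc _ = ‖c⁻¹ • (hA.toLp - c • hK.toLp)‖ := by rw [smul_sub, inv_smul_smul₀ hc.ne']
    _ = c⁻¹ * ‖hA.toLp - c • hK.toLp‖ := by rw [norm_smul, Real.norm_of_nonneg (by positivity)]
    _ ≤ c⁻¹ * (c * δ) := by gcongr
    _ = δ := inv_mul_cancel_left₀ hc.ne' δ

lemma ae_eq_zero_of_re_integral_conj_mul_eq_zero {α : Type*} [MeasurableSpace α] {μ : Measure α}
    {A B K : α → ℂ} {c₁ c₂ : ℝ} (h₁ : 0 < c₁) (h₂ : 0 < c₂)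
    (hA : MemLp A 2 μ) (hB : MemLp B 2 μ) (hK : MemLp K 2 μ)
    (h : (∫ s, conj (A s) * B s ∂μ).re = 0)
    (ha : eLpNorm (A - c₁ • K) 2 μ ≤ ENNReal.ofReal (c₁ * ((eLpNorm K 2 μ).toReal / 3)))
    (hb : eLpNorm (B - c₂ • K) 2 μ ≤ ENNReal.ofReal (c₂ * ((eLpNorm K 2 μ).toReal / 3))) :
    K =ᵐ[μ] 0 := by
  have inner_toLp : inner ℂ hA.toLp hB.toLp = ∫ s, conj (A s) * B s ∂μ := by
    rw [L2.inner_def]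
    refine integral_congr_ae ?_
    filter_upwards [hA.coeFn_toLp, hB.coeFn_toLp] with s hAs hBs
    rw [hAs, hBs, RCLike.inner_apply, mul_comm]
  have re_inner : RCLike.re (inner ℂ (c₁⁻¹ • hA.toLp) (c₂⁻¹ • hB.toLp)) = 0 := by
    have coe_smul (c : ℝ) (X : Lp ℂ 2 μ) : c • X = (c : ℂ) • X := (Complex.coe_smul c X).symm
    rw [coe_smul, coe_smul, inner_smul_left, inner_smul_right, inner_toLp,
      Complex.conj_ofReal, RCLike.re_eq_complex_re, Complex.re_ofReal_mul, Complex.re_ofReal_mul, h,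
      mul_zero, mul_zero]
  rw [← Lp.norm_toLp K hK] at ha hb
  have toLp_eq_zero := eq_zero_of_re_inner_eq_zero re_inner
    (norm_inv_smul_toLp_sub_le h₁ (by positivity) hA hK ha)
    (norm_inv_smul_toLp_sub_le h₂ (by positivity) hB hK hb)
  exact (hK.coeFn_toLp.symm.trans (by rw [toLp_eq_zero])).trans (Lp.coeFn_zero _ _ _)

section QuarticOp

variable {F : Type*} [NormedAddCommGroup F] [NormedSpace ℝ F] {b d : ℝ} {g : ℝ → F}

lemma contDiff_iteratedDeriv (hg : ContDiff ℝ ∞ g) (k : ℕ) : ContDiff ℝ ∞ (iteratedDeriv k g) := by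
  rw [iteratedDeriv_eq_iterate]
  exact hg.iterate_deriv k

lemma hasCompactSupport_iteratedDeriv (hg : HasCompactSupport g) (k : ℕ) :
    HasCompactSupport (iteratedDeriv k g) := by
  induction k with
  | zero => rwa [iteratedDeriv_zero]
  | succ k ih => rw [iteratedDeriv_succ]; exact ih.deriv

lemma iteratedDeriv_ofReal (g : ℝ → ℝ) (hg : ContDiff ℝ ∞ g) (k : ℕ) :
    iteratedDeriv k (fun s => (g s : ℂ)) = fun s => ((iteratedDeriv k g s : ℝ) : ℂ) := by
  induction k with
  | zero => simp
  | succ k ih =>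
    ext s
    rw [iteratedDeriv_succ, ih, iteratedDeriv_succ]
    exact ((contDiff_iteratedDeriv hg k).differentiable (by simp) s).hasDerivAt.ofReal_comp.deriv

/-- The constant coefficient operator `D⁴ + b D² + d`, which is what remains of `Δ² + c|x|⁻⁴` in the
variable `log |x|` after conjugation with powers of `|x|`. -/
def quarticOp (b d : ℝ) (g : ℝ → F) : ℝ → F :=
  iteratedDeriv 4 g + b • iteratedDeriv 2 g + d • g

lemma contDiff_quarticOp (hg : ContDiff ℝ ∞ g) : ContDiff ℝ ∞ (quarticOp b d g) :=
  ((contDiff_iteratedDeriv hg 4).add ((contDiff_iteratedDeriv hg 2).const_smul b)).add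
    (hg.const_smul d)

lemma hasCompactSupport_quarticOp (hg : HasCompactSupport g) :
    HasCompactSupport (quarticOp b d g) :=
  ((hasCompactSupport_iteratedDeriv hg 4).add
    ((hasCompactSupport_iteratedDeriv hg 2).smul_left (f := fun _ => b))).add
    (hg.smul_left (f := fun _ => d))

lemma quarticOp_comp_const_sub (g : ℝ → F) (s t : ℝ) :
    quarticOp b d (fun r => g (s - r)) t = quarticOp b d g (s - t) := by
  simp only [quarticOp, Pi.add_apply, Pi.smul_apply, iteratedDeriv_comp_const_sub, even_two,
    Even.neg_pow, one_pow, one_smul, Even.neg_pow (by decide : Even 4)]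

lemma quarticOp_ofReal {g : ℝ → ℝ} (hg : ContDiff ℝ ∞ g) :
    quarticOp b d (fun s => (g s : ℂ)) = fun s => ((quarticOp b d g s : ℝ) : ℂ) := by
  ext s
  simp [quarticOp, iteratedDeriv_ofReal _ hg]

end QuarticOp

section WeakSolution

section ExpWeight

variable {E : Type*} [NormedAddCommGroup E] [NormedSpace ℝ E] {Φ : ℝ → ℝ} {K : ℝ → E}

lemma exp_mul_convolution (Φ : ℝ → ℝ) (K : ℝ → E) (a s : ℝ) :
    ((fun t => Real.exp (a * t) * Φ t) ⋆[lsmul ℝ ℝ] K) s =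
      Real.exp (a * s) • (Φ ⋆[lsmul ℝ ℝ] fun t => Real.exp (-a * t) • K t) s := by
  rw [convolution_eq_swap, convolution_eq_swap, ← integral_smul]
  congr 1 with t
  have exp_sub : Real.exp (a * (s - t)) = Real.exp (a * s) * Real.exp (-a * t) := by
    rw [← Real.exp_add]
    ring_nf
  simp only [ContinuousLinearMap.lsmul_apply, smul_smul, exp_sub]
  ring_nf

lemma locallyIntegrable_exp_smul (hK : LocallyIntegrable K) (a : ℝ) :
    LocallyIntegrable fun t => Real.exp (a * t) • K t :=
  hK.continuous_smul (by fun_prop)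

lemma isLittleO_convolution_exp_smul (hΦ : Continuous Φ) (hΦc : HasCompactSupport Φ)
    (hK : MemLp K 2) (a : ℝ) :
    (Φ ⋆[lsmul ℝ ℝ] fun t => Real.exp (-a * t) • K t) =o[cocompact ℝ]
      fun s => Real.exp (-a * s) := by
  have tendsto_weighted := tendsto_convolution_cocompact 2 ENNReal.ofNat_ne_top
    (Φ := fun t => Real.exp (a * t) * Φ t) (by fun_prop) hΦc.mul_left hK
  have exp_smul_isLittleO : (fun s => Real.exp (-a * s) •
      ((fun t => Real.exp (a * t) * Φ t) ⋆[lsmul ℝ ℝ] K) s) =o[cocompact ℝ]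
      fun s => Real.exp (-a * s) • (1 : ℝ) :=
    (isBigO_refl _ _).smul_isLittleO ((isLittleO_one_iff ℝ).2 tendsto_weighted)
  refine exp_smul_isLittleO.congr (fun s => ?_) fun s => by rw [smul_eq_mul, mul_one]
  rw [exp_mul_convolution, smul_smul, ← Real.exp_add, neg_mul, neg_add_cancel, Real.exp_zero,
    one_smul]

end ExpWeight

/-- The sequence of derivatives of the mollification `θ ⋆ h`. -/
def mollifiedJet (θ : ℝ → ℝ) (h : ℝ → ℂ) (k : ℕ) : ℝ → ℂ :=
  iteratedDeriv k θ ⋆[lsmul ℝ ℝ] h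

variable {θ : ℝ → ℝ} {h K : ℝ → ℂ} {β b d p q : ℝ} {z₁ z₂ ζ : ℂ}

lemma isJet_mollifiedJet (hθ : ContDiff ℝ ∞ θ) (hθc : HasCompactSupport θ)
    (hh : LocallyIntegrable h) : IsJet (mollifiedJet θ h) := fun k s => by
  unfold mollifiedJet
  rw [iteratedDeriv_succ]
  exact (hasCompactSupport_iteratedDeriv hθc k).hasDerivAt_convolution_left (lsmul ℝ ℝ)
    ((contDiff_iteratedDeriv hθ k).of_le (by simp)) hh s

lemma quadraticOp_quadraticOp_mollifiedJet (hθ : ContDiff ℝ ∞ θ) (hθc : HasCompactSupport θ)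
    (hh : LocallyIntegrable h) (p q s : ℝ) :
    quadraticOp p q (quadraticOp (-p) q (mollifiedJet θ h)) 0 s =
      (quarticOp (2 * q - p ^ 2) (q ^ 2) θ ⋆[lsmul ℝ ℝ] h) s := by
  have hc := hasCompactSupport_iteratedDeriv hθc
  have continuous_iteratedDeriv (k : ℕ) := (contDiff_iteratedDeriv hθ k).continuous
  have convolutionExists {Φ : ℝ → ℝ} (hΦ : Continuous Φ) (hΦc : HasCompactSupport Φ) :=
    hΦc.convolutionExists_left (lsmul ℝ ℝ) hΦ hh
  have exists_four := convolutionExists (continuous_iteratedDeriv 4) (hc 4)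
  have exists_two := convolutionExists ((continuous_iteratedDeriv 2).const_smul (2 * q - p ^ 2))
    ((hc 2).smul_left (f := fun _ => 2 * q - p ^ 2))
  have exists_zero := convolutionExists (hθ.continuous.const_smul (q ^ 2))
    (hθc.smul_left (f := fun _ => q ^ 2))
  have exists_sum := convolutionExists
    ((continuous_iteratedDeriv 4).add ((continuous_iteratedDeriv 2).const_smul (2 * q - p ^ 2)))
    ((hc 4).add ((hc 2).smul_left (f := fun _ => 2 * q - p ^ 2)))
  rw [quadraticOp_quadraticOp_neg, quarticOp, ConvolutionExists.add_distrib exists_sum exists_zero,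
    exists_four.add_distrib exists_two, smul_convolution, smul_convolution]
  simp [mollifiedJet]

/-- `K` solves `e^{-βs} (D⁴ + b D² + d) (e^{-βs} K) = ζ K` in the sense of distributions, both
sides being multiplied by `e^{βs}`. -/
def IsWeakSolution (β b d : ℝ) (ζ : ℂ) (K : ℝ → ℂ) : Prop :=
  ∀ ψ : ℝ → ℂ, ContDiff ℝ ∞ ψ → HasCompactSupport ψ →
    ∫ s, K s * (Real.exp (-β * s) * quarticOp b d ψ s - ζ * (Real.exp (β * s) * ψ s)) = 0

lemma IsWeakSolution.quarticOp_convolution (hK : IsWeakSolution β b d ζ K)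
    (hKl : LocallyIntegrable K) (hθ : ContDiff ℝ ∞ θ) (hθc : HasCompactSupport θ) (s : ℝ) :
    (quarticOp b d θ ⋆[lsmul ℝ ℝ] fun t => Real.exp (-β * t) • K t) s =
      ζ * (θ ⋆[lsmul ℝ ℝ] fun t => Real.exp (β * t) • K t) s := by
  have hθs : ContDiff ℝ ∞ fun t => θ (s - t) := by fun_prop
  have weak := hK (fun t => (θ (s - t) : ℂ)) (Complex.ofRealCLM.contDiff.comp hθs)
    ((hθc.comp_homeomorph (Homeomorph.subLeft s)).comp_left Complex.ofReal_zero)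
  rw [quarticOp_ofReal hθs] at weak
  have integrable {Φ : ℝ → ℝ} (a : ℝ) (hΦ : Continuous Φ) (hΦc : HasCompactSupport Φ) :
      Integrable fun t => Φ (s - t) • (Real.exp (a * t) • K t) :=
    (hΦc.convolutionExists_left (lsmul ℝ ℝ) hΦ (locallyIntegrable_exp_smul hKl a)
      s).integrable_swap
  rw [← sub_eq_zero, ← weak, convolution_eq_swap, convolution_eq_swap, ← integral_const_mul]
  refine (integral_sub
    (integrable (-β) (contDiff_quarticOp hθ).continuous (hasCompactSupport_quarticOp hθc))
    ((integrable β hθ.continuous hθc).const_mul ζ)).symm.trans ?_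
  congr 1 with t
  simp only [quarticOp_comp_const_sub, Complex.real_smul]
  ring

lemma conj_convolution_mul_convolution (θ : ℝ → ℝ) (K : ℝ → ℂ) (β s : ℝ) :
    conj (((fun t => Real.exp (β * t) * θ t) ⋆[lsmul ℝ ℝ] K) s) *
        ((fun t => Real.exp (-β * t) * θ t) ⋆[lsmul ℝ ℝ] K) s =
      conj ((θ ⋆[lsmul ℝ ℝ] fun t => Real.exp (-β * t) • K t) s) *
        (θ ⋆[lsmul ℝ ℝ] fun t => Real.exp (β * t) • K t) s := by
  have exp_mul_exp : (Real.exp (β * s) : ℂ) * Real.exp (-β * s) = 1 := by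
    rw [← Complex.ofReal_mul, ← Real.exp_add, neg_mul, add_neg_cancel, Real.exp_zero,
      Complex.ofReal_one]
  rw [exp_mul_convolution, exp_mul_convolution, neg_neg, Complex.real_smul, Complex.real_smul,
    map_mul, Complex.conj_ofReal, mul_mul_mul_comm, exp_mul_exp, one_mul]

lemma IsWeakSolution.re_integral_conj_mul_eq_zero
    (hK : IsWeakSolution β (2 * q - p ^ 2) (q ^ 2) ζ K) (hβ : 0 < β) (h₁ : β ≤ z₁.re)
    (h₂ : β ≤ z₂.re) (hp : z₁ + z₂ = p) (hq : z₁ * z₂ = q) (hζ : ζ.re = 0) (hζ₀ : ζ ≠ 0)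
    (hK₂ : MemLp K 2) (hθ : ContDiff ℝ ∞ θ) (hθc : HasCompactSupport θ) :
    (∫ s, conj (((fun t => Real.exp (β * t) * θ t) ⋆[lsmul ℝ ℝ] K) s) *
      ((fun t => Real.exp (-β * t) * θ t) ⋆[lsmul ℝ ℝ] K) s).re = 0 := by
  have hKl : LocallyIntegrable K := hK₂.locallyIntegrable one_le_two
  have hKexp := locallyIntegrable_exp_smul hKl (-β)
  have hθ₀ := hθ.continuous
  have equation (s : ℝ) : quadraticOp p q (quadraticOp (-p) q (mollifiedJet θ _)) 0 s = _ :=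
    (quadraticOp_quadraticOp_mollifiedJet hθ hθc hKexp p q s).trans
      (hK.quarticOp_convolution hKl hθ hθc s)
  have growth : (θ ⋆[lsmul ℝ ℝ] fun t => Real.exp (β * t) • K t) =o[cocompact ℝ]
      fun s => Real.exp (β * s) := by
    simpa only [neg_neg] using isLittleO_convolution_exp_smul hθ₀ hθc hK₂ (-β)
  have tendsto_zero := (isJet_mollifiedJet hθ hθc hKexp).tendsto_integral_im hβ h₁ h₂ hp hq
    (fun k => isLittleO_convolution_exp_smul (contDiff_iteratedDeriv hθ k).continuous
      (hasCompactSupport_iteratedDeriv hθc k) hK₂ β)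
    ((growth.const_mul_left ζ).congr_left fun s => (equation s).symm)
  have memLp_weighted (a : ℝ) :
      MemLp ((fun t => Real.exp (a * t) * θ t) ⋆[lsmul ℝ ℝ] K) 2 :=
    memLp_convolution (by fun_prop) hθc.mul_left hK₂
  have integrable_product : Integrable fun s =>
      conj (((fun t => Real.exp (β * t) * θ t) ⋆[lsmul ℝ ℝ] K) s) *
        ((fun t => Real.exp (-β * t) * θ t) ⋆[lsmul ℝ ℝ] K) s :=
    (memLp_weighted β).star.integrable_mul (memLp_weighted (-β))
  have tendsto_integral := intervalIntegral_tendsto_integral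
    (integrable_product.re.const_mul ζ.im) tendsto_neg_atTop_atBot tendsto_id
  have integral_eq_zero := tendsto_nhds_unique tendsto_integral (tendsto_zero.congr fun R => by
    congr 1 with s
    rw [equation, mul_left_comm, conj_convolution_mul_convolution, Complex.mul_im, hζ, zero_mul,
      zero_add, mollifiedJet, iteratedDeriv_zero]
    rfl)
  rw [integral_const_mul, integral_re integrable_product] at integral_eq_zero
  exact (mul_eq_zero.1 integral_eq_zero).resolve_left fun im_eq => hζ₀ (Complex.ext hζ im_eq)

theorem IsWeakSolution.ae_eq_zero (hK : IsWeakSolution β (2 * q - p ^ 2) (q ^ 2) ζ K) (hβ : 0 < β)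
    (h₁ : β ≤ z₁.re) (h₂ : β ≤ z₂.re) (hp : z₁ + z₂ = p) (hq : z₁ * z₂ = q) (hζ : ζ.re = 0)
    (hζ₀ : ζ ≠ 0) (hK₂ : MemLp K 2) : K =ᵐ[volume] 0 := by
  by_cases norm_eq : (eLpNorm K 2 volume).toReal = 0
  · rw [ENNReal.toReal_eq_zero_iff] at norm_eq
    exact (eLpNorm_eq_zero_iff hK₂.1 two_ne_zero).1 (norm_eq.resolve_right hK₂.2.ne)
  have δ_pos : 0 < (eLpNorm K 2 volume).toReal / 3 :=
    div_pos (ENNReal.toReal_nonneg.lt_of_ne' norm_eq) three_pos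
  obtain ⟨ε, hε, approx⟩ := exists_forall_eLpNorm_convolution_sub_le hK₂ δ_pos
  let θ : ContDiffBump (0 : ℝ) := ⟨ε / 2, ε, half_pos hε, half_lt_self hε⟩
  let Φ (a t : ℝ) : ℝ := Real.exp (a * t) * θ t
  have Φ_cont (a : ℝ) : Continuous (Φ a) := by
    have := θ.continuous
    fun_prop
  have Φ_compact (a : ℝ) : HasCompactSupport (Φ a) := θ.hasCompactSupport.mul_left
  have Φ_nonneg (a t : ℝ) : 0 ≤ Φ a t := mul_nonneg (Real.exp_pos _).le θ.nonneg
  have Φ_support (a : ℝ) : tsupport (Φ a) ⊆ Metric.closedBall 0 ε :=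
    (closure_mono (Function.support_mul_subset_right _ _)).trans θ.tsupport_eq.le
  have Φ_pos (a : ℝ) : 0 < ∫ t, Φ a t :=
    (Φ_cont a).integral_pos_of_hasCompactSupport_nonneg_nonzero (x := 0) (Φ_compact a)
      (Φ_nonneg a) (mul_pos (Real.exp_pos _) (θ.pos_of_mem_ball (by simp [θ, hε]))).ne'
  have memLp_Φ (a : ℝ) := memLp_convolution (Φ_cont a) (Φ_compact a) hK₂
  have approx_Φ (a : ℝ) := approx (Φ a) (Φ_cont a) (Φ_compact a) (Φ_support a) (Φ_nonneg a)
  exact ae_eq_zero_of_re_integral_conj_mul_eq_zero (Φ_pos β) (Φ_pos (-β)) (memLp_Φ β)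
    (memLp_Φ (-β)) hK₂ (hK.re_integral_conj_mul_eq_zero hβ h₁ h₂ hp hq hζ hζ₀ hK₂ θ.contDiff
      θ.hasCompactSupport) (approx_Φ β) (approx_Φ (-β))

end WeakSolution

section AbstractCriterion

variable {H : Type*} [NormedAddCommGroup H] [InnerProductSpace ℂ H]

lemma mem_adjoint_of_mem_topologicalClosure {g : Submodule ℂ (H × H)} (hg : g ≤ g.adjoint)
    {p : WithLp 2 (H × H)}
    (hp : p ∈ (g.map (WithLp.linearEquiv 2 ℂ (H × H)).symm.toLinearMap).topologicalClosure) :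
    p.ofLp ∈ g.adjoint := by
  simp only [Submodule.mem_adjoint_iff]
  intro a b hab
  have closed : IsClosed {z : WithLp 2 (H × H) | inner ℂ b z.ofLp.1 - inner ℂ a z.ofLp.2 = 0} :=
    isClosed_eq (by fun_prop) continuous_const
  refine closure_minimal ?_ closed hp
  rintro _ ⟨z, hz, rfl⟩
  exact (g.mem_adjoint_iff z).1 (hg hz) a b hab

/- An element `(u, u')` of the adjoint orthogonal to `g` satisfies `g* u = u'` and `g* u' = -u`,
so `u' + iu` lies in the kernel of `g* - i`. -/
lemma eq_zero_of_mem_adjoint_of_orthogonal {g : Submodule ℂ (H × H)}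
    (h : ∀ ζ : ℂ, ζ ^ 2 = -1 → ∀ w : H, (∀ a b, (a, b) ∈ g → inner ℂ w (b - ζ • a) = 0) → w = 0)
    {u u' : H} (hu : (u, u') ∈ g.adjoint)
    (horth : ∀ a b, (a, b) ∈ g → inner ℂ a u + inner ℂ b u' = 0) : u = 0 ∧ u' = 0 := by
  have weak (a b : H) (hab : (a, b) ∈ g) : inner ℂ u b = inner ℂ u' a := by
    have := congrArg conj (sub_eq_zero.1 ((g.mem_adjoint_iff _).1 hu a b hab))
    simpa only [inner_conj_symm] using this
  have weak' (a b : H) (hab : (a, b) ∈ g) : inner ℂ u' b = -inner ℂ u a := by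
    have := congrArg conj (eq_neg_of_add_eq_zero_right (horth a b hab))
    simpa only [inner_conj_symm, map_neg] using this
  have hu' : u' + Complex.I • u = 0 := by
    refine h (-Complex.I) (by simp) _ fun a b hab => ?_
    simp only [inner_sub_right, inner_add_left, inner_smul_left, inner_smul_right, weak a b hab,
      weak' a b hab, Complex.conj_I]
    linear_combination -inner ℂ u a * Complex.I_sq
  have hu₀ : u = 0 := by
    refine h Complex.I (by simp) _ fun a b hab => ?_
    rw [inner_sub_right, weak a b hab, eq_neg_of_add_eq_zero_left hu', inner_neg_left,
      inner_smul_left, inner_smul_right, Complex.conj_I]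
    ring
  exact ⟨hu₀, by simpa only [hu₀, smul_zero, add_zero] using hu'⟩

variable [CompleteSpace H]

lemma adjoint_eq_adjoint_adjoint {g : Submodule ℂ (H × H)} (hg : g ≤ g.adjoint)
    (h : ∀ ζ : ℂ, ζ ^ 2 = -1 → ∀ w : H, (∀ a b, (a, b) ∈ g → inner ℂ w (b - ζ • a) = 0) → w = 0) :
    g.adjoint.adjoint = g.adjoint := by
  refine le_antisymm (fun x hx => (g.mem_adjoint_iff x).2 fun a b hab =>
    (g.adjoint.mem_adjoint_iff x).1 hx a b (hg hab)) fun x hx => ?_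
  obtain ⟨k, hk, o, ho, hko⟩ := (g.map (WithLp.linearEquiv 2 ℂ
    (H × H)).symm.toLinearMap).topologicalClosure.exists_add_mem_mem_orthogonal (WithLp.toLp 2 x)
  have eq_add : x = k.ofLp + o.ofLp := congrArg WithLp.ofLp hko
  have ho_adjoint : o.ofLp ∈ g.adjoint :=
    eq_sub_of_add_eq' eq_add.symm ▸ sub_mem hx (mem_adjoint_of_mem_topologicalClosure hg hk)
  obtain ⟨ho₁, ho₂⟩ := eq_zero_of_mem_adjoint_of_orthogonal h ho_adjoint fun a b hab =>
    (Submodule.mem_orthogonal _ o).1 ho (WithLp.toLp 2 (a, b))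
      (Submodule.le_topologicalClosure _ ⟨(a, b), hab, rfl⟩)
  have ho_zero : o.ofLp = 0 := Prod.ext ho₁ ho₂
  have hxk : x = k.ofLp := by rw [eq_add, ho_zero, add_zero]
  rw [g.adjoint.mem_adjoint_iff]
  intro a b hab
  have closed : IsClosed {z : WithLp 2 (H × H) | inner ℂ b z.ofLp.1 - inner ℂ a z.ofLp.2 = 0} :=
    isClosed_eq (by fun_prop) continuous_const
  rw [hxk]
  refine closure_minimal ?_ closed hk
  rintro _ ⟨z, hz, rfl⟩
  have := congrArg conj ((g.mem_adjoint_iff (a, b)).1 hab z.1 z.2 hz)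
  rw [map_sub, inner_conj_symm, inner_conj_symm, map_zero] at this
  exact sub_eq_zero.2 (sub_eq_zero.1 this).symm

theorem isSelfAdjoint_adjoint_of_isFormalAdjoint {T : H →ₗ.[ℂ] H}
    (hd : Dense (T.domain : Set H)) (hT : T.IsFormalAdjoint T)
    (h : ∀ ζ : ℂ, ζ ^ 2 = -1 →
      ∀ w : H, (∀ x : T.domain, inner ℂ w (T x - ζ • (x : H)) = 0) → w = 0) :
    IsSelfAdjoint T.adjoint := by
  have graph_adjoint := LinearPMap.adjoint_graph_eq_graph_adjoint hd
  have le_adjoint : T ≤ T.adjoint := LinearPMap.IsFormalAdjoint.le_adjoint hd hT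
  rw [LinearPMap.isSelfAdjoint_def]
  refine LinearPMap.eq_of_eq_graph ?_
  rw [LinearPMap.adjoint_graph_eq_graph_adjoint (hd.mono le_adjoint.1), graph_adjoint]
  refine adjoint_eq_adjoint_adjoint (graph_adjoint ▸ LinearPMap.le_graph_of_le le_adjoint)
    fun ζ hζ w hw => h ζ hζ w fun x => hw x (T x) (T.mem_graph x)

theorem inner_eq_inner_of_isSelfAdjoint_adjoint {T : H →ₗ.[ℂ] H} (hd : Dense (T.domain : Set H))
    (hT : IsSelfAdjoint T.adjoint) {u u' v v' : H}
    (hu : ∀ x : T.domain, inner ℂ u' (x : H) = inner ℂ u (T x))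
    (hv : ∀ x : T.domain, inner ℂ v' (x : H) = inner ℂ v (T x)) :
    inner ℂ u' v = inner ℂ u v' := by
  have hu_mem : u ∈ T.adjoint.domain := LinearPMap.mem_adjoint_domain_of_exists u ⟨u', hu⟩
  have hv_mem : v ∈ T.adjoint.domain := LinearPMap.mem_adjoint_domain_of_exists v ⟨v', hv⟩
  have symmetric := LinearPMap.adjoint_isFormalAdjoint hT.dense_domain
  rw [LinearPMap.isSelfAdjoint_def.1 hT] at symmetric
  have := symmetric ⟨u, hu_mem⟩ ⟨v, hv_mem⟩
  rwa [LinearPMap.adjoint_apply_eq hd _ hu, LinearPMap.adjoint_apply_eq hd _ hv] at this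

end AbstractCriterion

/-- Membership in `C₀^∞(ℝⁿ \ {0})`, the domain of `T2op n c`. -/
structure IsTest {n : ℕ} (φ : 𝔼 n → ℂ) : Prop where
  contDiff : ContDiff ℝ ∞ φ
  hasCompactSupport : HasCompactSupport φ
  zero_notMem_tsupport : (0 : 𝔼 n) ∉ tsupport φ

/-- Smoothness on `ℝⁿ \ {0}`. -/
def SmoothOff {n : ℕ} (u : 𝔼 n → ℂ) : Prop :=
  ContDiffOn ℝ ∞ u {0}ᶜ

/-- The formal differential expression `Δ² + c|x|⁻⁴` of the operator `T2op n c`, on all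
functions. -/
def T2form {n : ℕ} (c : ℝ) (φ : 𝔼 n → ℂ) (x : 𝔼 n) : ℂ :=
  laplacian (laplacian φ) x + ((c * (‖x‖ ^ 4)⁻¹ : ℝ) : ℂ) * φ x

section Laplacian

variable {n : ℕ} {u v : 𝔼 n → ℂ} {x : 𝔼 n}

lemma laplacian_eq_mathlibLaplacian (hu : ContDiffAt ℝ 2 u x) :
    laplacian u x = Laplacian.laplacian u x := by
  have hu' : DifferentiableAt ℝ (fderiv ℝ u) x :=
    (hu.fderiv_right (m := 1) (by norm_num)).differentiableAt (by simp)
  rw [InnerProductSpace.laplacian_eq_iteratedFDeriv_orthonormalBasis u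
    (EuclideanSpace.basisFun (Fin n) ℝ)]
  refine Finset.sum_congr rfl fun i _ => ?_
  rw [iteratedFDeriv_two_apply, fderiv_clm_apply hu' (differentiableAt_const _)]
  simp

lemma laplacian_add (hu : ContDiffAt ℝ 2 u x) (hv : ContDiffAt ℝ 2 v x) :
    laplacian (u + v) x = laplacian u x + laplacian v x := by
  have huv : ContDiffAt ℝ 2 (u + v) x := hu.add hv
  rw [laplacian_eq_mathlibLaplacian hu, laplacian_eq_mathlibLaplacian hv,
    laplacian_eq_mathlibLaplacian huv, hu.laplacian_add hv]

lemma laplacian_congr (h : u =ᶠ[𝓝 x] v) : laplacian u x = laplacian v x := by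
  refine Finset.sum_congr rfl fun i _ => ?_
  have fderiv_congr : (fun y => fderiv ℝ u y (EuclideanSpace.single i 1)) =ᶠ[𝓝 x]
      fun y => fderiv ℝ v y (EuclideanSpace.single i 1) := by
    filter_upwards [h.eventuallyEq_nhds] with y hy
    rw [hy.fderiv_eq]
  rw [fderiv_congr.fderiv_eq]

lemma laplacian_const_smul (a : ℂ) : laplacian (a • u) = a • laplacian u := by
  have fderiv_smul (f : 𝔼 n → ℂ) (w : 𝔼 n) :
      (fun y => fderiv ℝ (a • f) y w) = a • fun y => fderiv ℝ f y w :=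
    funext fun y => DFunLike.congr_fun (congrFun (fderiv_const_smul_field a) y) w
  ext x
  rw [Pi.smul_apply, laplacian, laplacian, Finset.smul_sum]
  refine Finset.sum_congr rfl fun i _ => ?_
  rw [fderiv_smul u]
  exact congrFun (fderiv_smul _ _) x

lemma laplacian_conj : laplacian (fun x => conj (u x)) = fun x => conj (laplacian u x) := by
  have fderiv_conj (f : 𝔼 n → ℂ) (y w : 𝔼 n) :
      fderiv ℝ (fun y => conj (f y)) y w = conj (fderiv ℝ f y w) :=
    DFunLike.congr_fun (Complex.conjCLE.comp_fderiv (f := f) (x := y)) w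
  ext x
  simp only [laplacian, fderiv_conj, map_sum]

lemma T2form_const_smul (c : ℝ) (a : ℂ) : T2form c (a • u) = a • T2form c u := by
  ext x
  simp only [T2form, laplacian_const_smul, Pi.smul_apply, smul_eq_mul]
  ring

lemma T2form_conj (c : ℝ) : T2form c (fun x => conj (u x)) = fun x => conj (T2form c u x) := by
  ext x
  simp only [T2form, laplacian_conj, map_add, map_mul, Complex.conj_ofReal]

end Laplacian

section SmoothOff

variable {n : ℕ} {u v : 𝔼 n → ℂ} {x : 𝔼 n}

lemma SmoothOff.contDiffAt (hu : SmoothOff u) (hx : x ≠ 0) : ContDiffAt ℝ ∞ u x :=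
  ContDiffOn.contDiffAt hu (isOpen_compl_singleton.mem_nhds hx)

lemma SmoothOff.differentiableAt (hu : SmoothOff u) (hx : x ≠ 0) : DifferentiableAt ℝ u x :=
  (hu.contDiffAt hx).differentiableAt (by simp)

protected lemma SmoothOff.fderiv_apply (hu : SmoothOff u) (v : 𝔼 n) :
    SmoothOff (fun x => fderiv ℝ u x v) :=
  (ContDiffOn.fderiv_of_isOpen (m := ∞) hu isOpen_compl_singleton (by simp)).clm_apply
    contDiffOn_const

lemma SmoothOff.add (hu : SmoothOff u) (hv : SmoothOff v) : SmoothOff (u + v) :=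
  ContDiffOn.add hu hv

lemma SmoothOff.const_smul (hu : SmoothOff u) (a : ℂ) : SmoothOff (a • u) :=
  ContDiffOn.const_smul a hu

lemma SmoothOff.mul (hu : SmoothOff u) (hv : SmoothOff v) : SmoothOff (fun x => u x * v x) :=
  ContDiffOn.mul hu hv

lemma SmoothOff.conj (hu : SmoothOff u) : SmoothOff (fun x => conj (u x)) :=
  Complex.conjCLE.contDiff.comp_contDiffOn hu

protected lemma SmoothOff.laplacian (hu : SmoothOff u) : SmoothOff (laplacian u) :=
  ContDiffOn.sum fun _ _ => (hu.fderiv_apply _).fderiv_apply _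

lemma SmoothOff.laplacian_add (hu : SmoothOff u) (hv : SmoothOff v) (hx : x ≠ 0) :
    laplacian (u + v) x = laplacian u x + laplacian v x :=
  _root_.laplacian_add ((hu.contDiffAt hx).of_le ENat.LEInfty.out)
    ((hv.contDiffAt hx).of_le ENat.LEInfty.out)

lemma smoothOff_const_mul_inv_norm_pow_four (c : ℝ) :
    SmoothOff (fun x : 𝔼 n => ((c * (‖x‖ ^ 4)⁻¹ : ℝ) : ℂ)) := by
  refine Complex.ofRealCLM.contDiff.comp_contDiffOn (contDiffOn_const.mul ?_)
  refine ContDiffOn.inv ?_ fun x hx => pow_ne_zero 4 (norm_ne_zero_iff.2 hx)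
  simpa only [← pow_mul] using ((contDiff_norm_sq ℝ (E := 𝔼 n)).pow 2).contDiffOn

protected lemma SmoothOff.T2form (hu : SmoothOff u) (c : ℝ) : SmoothOff (T2form c u) :=
  hu.laplacian.laplacian.add ((smoothOff_const_mul_inv_norm_pow_four c).mul hu)

end SmoothOff

section IsTest

variable {n : ℕ} {φ ψ u : 𝔼 n → ℂ}

lemma IsTest.smoothOff (hφ : IsTest φ) : SmoothOff φ := hφ.contDiff.contDiffOn

lemma IsTest.ne_zero (hφ : IsTest φ) {x : 𝔼 n} (hx : x ∈ tsupport φ) : x ≠ 0 :=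
  fun h => hφ.zero_notMem_tsupport (h ▸ hx)

lemma IsTest.of_smoothOff (hu : SmoothOff u) (hc : HasCompactSupport u)
    (h₀ : (0 : 𝔼 n) ∉ tsupport u) : IsTest u := by
  refine ⟨contDiff_iff_contDiffAt.2 fun x => ?_, hc, h₀⟩
  by_cases hx : x = 0
  · subst hx
    exact contDiffAt_const.congr_of_eventuallyEq (notMem_tsupport_iff_eventuallyEq.1 h₀)
  · exact hu.contDiffAt hx

lemma IsTest.mul_smoothOff (hφ : IsTest φ) (hu : SmoothOff u) : IsTest (fun x => φ x * u x) :=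
  .of_smoothOff (hφ.smoothOff.mul hu) hφ.hasCompactSupport.mul_right
    fun h => hφ.zero_notMem_tsupport (tsupport_mul_subset_left h)

protected lemma IsTest.zero : IsTest (0 : 𝔼 n → ℂ) :=
  ⟨contDiff_const, .zero, by simp [tsupport]⟩

lemma IsTest.add (hφ : IsTest φ) (hψ : IsTest ψ) : IsTest (φ + ψ) :=
  ⟨hφ.contDiff.add hψ.contDiff, hφ.hasCompactSupport.add hψ.hasCompactSupport, fun h =>
    (tsupport_add φ ψ h).elim hφ.zero_notMem_tsupport hψ.zero_notMem_tsupport⟩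

lemma IsTest.const_smul (hφ : IsTest φ) (a : ℂ) : IsTest (a • φ) :=
  ⟨hφ.contDiff.const_smul a, hφ.hasCompactSupport.smul_left, fun h =>
    hφ.zero_notMem_tsupport (closure_mono (Function.support_const_smul_subset a φ) h)⟩

lemma IsTest.conj (hφ : IsTest φ) : IsTest (fun x => conj (φ x)) :=
  .of_smoothOff hφ.smoothOff.conj
    (hφ.hasCompactSupport.comp_left (g := starRingEnd ℂ) (map_zero _)) fun h =>
      hφ.zero_notMem_tsupport
        (closure_mono (Function.support_comp_subset (map_zero (starRingEnd ℂ)) φ) h)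

protected lemma IsTest.fderiv_apply (hφ : IsTest φ) (v : 𝔼 n) :
    IsTest (fun x => fderiv ℝ φ x v) :=
  .of_smoothOff (hφ.smoothOff.fderiv_apply v) (hφ.hasCompactSupport.fderiv_apply ℝ v) fun h =>
    hφ.zero_notMem_tsupport (tsupport_fderiv_apply_subset ℝ v h)

lemma IsTest.sum {ι : Type*} (s : Finset ι) {f : ι → 𝔼 n → ℂ} (h : ∀ i ∈ s, IsTest (f i)) :
    IsTest (fun x => ∑ i ∈ s, f i x) := by
  simpa only [Finset.sum_fn] using Finset.sum_induction f IsTest (fun _ _ => .add) .zero h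

protected lemma IsTest.laplacian (hφ : IsTest φ) : IsTest (laplacian φ) :=
  .sum _ fun _ _ => (hφ.fderiv_apply _).fderiv_apply _

protected lemma IsTest.T2form (hφ : IsTest φ) (c : ℝ) : IsTest (T2form c φ) := by
  refine hφ.laplacian.laplacian.add ?_
  simpa only [mul_comm] using hφ.mul_smoothOff (smoothOff_const_mul_inv_norm_pow_four c)

lemma IsTest.integrable (hφ : IsTest φ) : Integrable φ :=
  hφ.contDiff.continuous.integrable_of_hasCompactSupport hφ.hasCompactSupport

lemma IsTest.memLp (hφ : IsTest φ) {p : ℝ≥0∞} : MemLp φ p volume :=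
  hφ.contDiff.continuous.memLp_of_hasCompactSupport hφ.hasCompactSupport

lemma IsTest.integral_fderiv_mul (hφ : IsTest φ) (hu : SmoothOff u) (v : 𝔼 n) :
    ∫ x, fderiv ℝ φ x v * u x = -∫ x, φ x * fderiv ℝ u x v := by
  have := integral_mul_fderiv_eq_neg_fderiv_mul_of_integrable (μ := volume) (f := u) (g := φ)
    (v := v) (by simpa only [mul_comm] using (hφ.mul_smoothOff (hu.fderiv_apply v)).integrable)
    (by simpa only [mul_comm] using ((hφ.fderiv_apply v).mul_smoothOff hu).integrable)
    (by simpa only [mul_comm] using (hφ.mul_smoothOff hu).integrable)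
    (fun x hx => hu.differentiableAt (hφ.ne_zero hx))
    (fun x _ => hφ.contDiff.differentiable (by simp) x)
  simpa only [mul_comm] using this

lemma IsTest.integral_laplacian_mul (hφ : IsTest φ) (hu : SmoothOff u) :
    ∫ x, laplacian φ x * u x = ∫ x, φ x * laplacian u x := by
  simp only [_root_.laplacian, Finset.sum_mul, Finset.mul_sum]
  rw [integral_finsetSum, integral_finsetSum]
  · refine Finset.sum_congr rfl fun i _ => ?_
    rw [(hφ.fderiv_apply _).integral_fderiv_mul hu, hφ.integral_fderiv_mul (hu.fderiv_apply _),
      neg_neg]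
  · exact fun i _ => (hφ.mul_smoothOff ((hu.fderiv_apply _).fderiv_apply _)).integrable
  · exact fun i _ => (((hφ.fderiv_apply _).fderiv_apply _).mul_smoothOff hu).integrable

lemma IsTest.integral_T2form_mul (hφ : IsTest φ) (hu : SmoothOff u) (c : ℝ) :
    ∫ x, T2form c φ x * u x = ∫ x, φ x * T2form c u x := by
  have potential := hφ.mul_smoothOff ((smoothOff_const_mul_inv_norm_pow_four c).mul hu)
  have left (x : 𝔼 n) : T2form c φ x * u x = laplacian (laplacian φ) x * u x +
      φ x * (((c * (‖x‖ ^ 4)⁻¹ : ℝ) : ℂ) * u x) := by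
    rw [T2form]
    ring
  simp only [left]
  simp only [T2form, mul_add]
  rw [integral_add (hφ.laplacian.laplacian.mul_smoothOff hu).integrable potential.integrable,
    integral_add (hφ.mul_smoothOff hu.laplacian.laplacian).integrable potential.integrable,
    hφ.laplacian.integral_laplacian_mul hu, hφ.integral_laplacian_mul hu.laplacian]

lemma IsTest.laplacian_add (hφ : IsTest φ) (hψ : IsTest ψ) :
    laplacian (φ + ψ) = laplacian φ + laplacian ψ :=
  funext fun _ => _root_.laplacian_add (hφ.contDiff.contDiffAt.of_le ENat.LEInfty.out)
    (hψ.contDiff.contDiffAt.of_le ENat.LEInfty.out)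

lemma IsTest.T2form_add (hφ : IsTest φ) (hψ : IsTest ψ) (c : ℝ) :
    T2form c (φ + ψ) = T2form c φ + T2form c ψ := by
  ext x
  simp only [_root_.T2form, hφ.laplacian_add hψ, hφ.laplacian.laplacian_add hψ.laplacian,
    Pi.add_apply]
  ring

end IsTest

section Operator

variable {n : ℕ} {c : ℝ}

lemma mem_graphOf_T2form {p : L²(n) × L²(n)} :
    p ∈ graphOf n (T2form c) ↔ ∃ φ : 𝔼 n → ℂ, IsTest φ ∧ p.1 =ᵐ[volume] φ ∧
      p.2 =ᵐ[volume] T2form c φ := by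
  refine ⟨fun hp => ?_, fun ⟨φ, hφ, h₁, h₂⟩ =>
    Submodule.subset_span ⟨φ, hφ.1, hφ.2, hφ.3, h₁, h₂⟩⟩
  induction hp using Submodule.span_induction with
  | mem p hp =>
    obtain ⟨φ, hφ, hφc, hφ₀, h₁, h₂⟩ := hp
    exact ⟨φ, ⟨hφ, hφc, hφ₀⟩, h₁, h₂⟩
  | zero =>
    refine ⟨(0 : ℂ) • 0, IsTest.zero.const_smul 0, ?_, ?_⟩
    · rw [zero_smul]
      exact Lp.coeFn_zero _ _ _
    · rw [T2form_const_smul, zero_smul]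
      exact Lp.coeFn_zero _ _ _
  | add p q _ _ hp hq =>
    obtain ⟨φ, hφ, hp₁, hp₂⟩ := hp
    obtain ⟨ψ, hψ, hq₁, hq₂⟩ := hq
    refine ⟨φ + ψ, hφ.add hψ, (Lp.coeFn_add _ _).trans (hp₁.add hq₁), ?_⟩
    rw [hφ.T2form_add hψ]
    exact (Lp.coeFn_add _ _).trans (hp₂.add hq₂)
  | smul a p _ hp =>
    obtain ⟨φ, hφ, hp₁, hp₂⟩ := hp
    refine ⟨a • φ, hφ.const_smul a, (Lp.coeFn_smul _ _).trans (hp₁.const_smul a), ?_⟩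
    rw [T2form_const_smul]
    exact (Lp.coeFn_smul _ _).trans (hp₂.const_smul a)

lemma snd_eq_zero_of_mem_graphOf_T2form (p : L²(n) × L²(n)) (hp : p ∈ graphOf n (T2form c))
    (h₀ : p.1 = 0) : p.2 = 0 := by
  obtain ⟨φ, hφ, h₁, h₂⟩ := mem_graphOf_T2form.1 hp
  have φ_eq_zero : φ = (0 : ℂ) • 0 := by
    rw [zero_smul, ← hφ.contDiff.continuous.ae_eq_iff_eq volume continuous_zero]
    exact h₁.symm.trans (h₀ ▸ Lp.coeFn_zero _ _ _)
  rw [φ_eq_zero, T2form_const_smul, zero_smul] at h₂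
  exact Lp.eq_zero_iff_ae_eq_zero.2 h₂

lemma exists_isTest_of_mem_domain (x : (T2op n c).domain) :
    ∃ φ : 𝔼 n → ℂ, IsTest φ ∧ (x : L²(n)) =ᵐ[volume] φ ∧ T2op n c x =ᵐ[volume] T2form c φ :=
  mem_graphOf_T2form.1 (Submodule.mem_graph_toLinearPMap snd_eq_zero_of_mem_graphOf_T2form x)

lemma IsTest.exists_mem_domain {φ : 𝔼 n → ℂ} (hφ : IsTest φ) (c : ℝ) :
    ∃ x : (T2op n c).domain,
      (x : L²(n)) =ᵐ[volume] φ ∧ T2op n c x =ᵐ[volume] T2form c φ := by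
  have mem_graph : (hφ.memLp.toLp φ, (hφ.T2form c).memLp.toLp _) ∈ (T2op n c).graph :=
    Submodule.toLinearPMap_graph_eq _ snd_eq_zero_of_mem_graphOf_T2form ▸
      mem_graphOf_T2form.2 ⟨φ, hφ, hφ.memLp.coeFn_toLp, (hφ.T2form c).memLp.coeFn_toLp⟩
  obtain ⟨x, hx, hTx⟩ := LinearPMap.mem_graph_iff _ |>.1 mem_graph
  exact ⟨x, hx ▸ hφ.memLp.coeFn_toLp, hTx ▸ (hφ.T2form c).memLp.coeFn_toLp⟩

lemma inner_eq_integral_of_ae {α : Type*} [MeasurableSpace α] {μ : Measure α} {x y : Lp ℂ 2 μ}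
    {u v : α → ℂ} (hx : x =ᵐ[μ] u) (hy : y =ᵐ[μ] v) :
    inner ℂ x y = ∫ a, v a * conj (u a) ∂μ := by
  rw [L2.inner_def]
  refine integral_congr_ae ?_
  filter_upwards [hx, hy] with a hxa hya
  rw [hxa, hya, RCLike.inner_apply]

lemma ae_eq_zero_of_forall_isTest (hn : n ≠ 0) {f : 𝔼 n → ℂ} (hf : LocallyIntegrableOn f {0}ᶜ)
    (h : ∀ φ : 𝔼 n → ℝ, IsTest (fun x => (φ x : ℂ)) → ∫ x, φ x • f x = 0) :
    f =ᵐ[volume] 0 := by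
  have : NeZero n := ⟨hn⟩
  have zero_off_zero := isOpen_compl_singleton.ae_eq_zero_of_integral_contDiff_smul_eq_zero hf
    fun g hg hgc hgs => h g ⟨Complex.ofRealCLM.contDiff.comp hg,
      hgc.comp_left (g := Complex.ofReal) rfl, fun h₀ =>
        hgs (closure_mono (Function.support_comp_subset (g := Complex.ofReal) rfl g) h₀) rfl⟩
  have ae_ne_zero : ∀ᵐ x : 𝔼 n, x ∈ ({0}ᶜ : Set (𝔼 n)) :=
    compl_mem_ae_iff.2 (measure_singleton _)
  filter_upwards [zero_off_zero, ae_ne_zero] with x hx hx₀ using hx hx₀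

lemma dense_domain_T2op (hn : n ≠ 0) : Dense ((T2op n c).domain : Set L²(n)) := by
  rw [Submodule.dense_iff_topologicalClosure_eq_top, Submodule.topologicalClosure_eq_top_iff,
    Submodule.eq_bot_iff]
  intro w hw
  rw [Lp.eq_zero_iff_ae_eq_zero]
  refine ae_eq_zero_of_forall_isTest hn
    (((Lp.memLp w).locallyIntegrable (by norm_num)).locallyIntegrableOn _) fun φ hφ => ?_
  obtain ⟨x, hx, -⟩ := hφ.exists_mem_domain c
  have inner_eq_zero := (Submodule.mem_orthogonal _ _).1 hw _ x.2
  rw [inner_eq_integral_of_ae hx EventuallyEq.rfl] at inner_eq_zero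
  simpa only [Complex.conj_ofReal, mul_comm, Complex.real_smul] using inner_eq_zero

lemma SmoothOff.inner_T2op {u : 𝔼 n → ℂ} (hu : SmoothOff u) (hu₂ : MemLp u 2)
    (hTu : MemLp (T2form c u) 2) (x : (T2op n c).domain) :
    inner ℂ hTu.toLp (x : L²(n)) = inner ℂ hu₂.toLp (T2op n c x) := by
  obtain ⟨φ, hφ, hx, hTx⟩ := exists_isTest_of_mem_domain x
  rw [inner_eq_integral_of_ae hTu.coeFn_toLp hx, inner_eq_integral_of_ae hu₂.coeFn_toLp hTx,
    hφ.integral_T2form_mul hu.conj, T2form_conj]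

lemma isFormalAdjoint_T2op : (T2op n c).IsFormalAdjoint (T2op n c) := by
  intro x y
  obtain ⟨φ, hφ, hx, hTx⟩ := exists_isTest_of_mem_domain x
  have := hφ.smoothOff.inner_T2op hφ.memLp (hφ.T2form c).memLp y
  rwa [Lp.ext (hx.trans hφ.memLp.coeFn_toLp.symm),
    Lp.ext (hTx.trans (hφ.T2form c).memLp.coeFn_toLp.symm)]

/-- `w` solves `(Δ² + c ‖x‖⁻⁴) w = ζ w` in the sense of distributions on `ℝⁿ ∖ {0}`. -/
def IsDistributionalSolution (c : ℝ) (ζ : ℂ) (w : 𝔼 n → ℂ) : Prop :=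
  ∀ φ, IsTest φ → ∫ x, w x * (T2form c φ x - ζ * φ x) = 0

theorem essentiallySelfAdjoint_T2op_of_forall_distributionalSolution (hn : n ≠ 0)
    (h : ∀ ζ : ℂ, ζ ^ 2 = -1 → ∀ w : 𝔼 n → ℂ, MemLp w 2 → IsDistributionalSolution c ζ w →
      w =ᵐ[volume] 0) :
    EssentiallySelfAdjoint (T2op n c) := by
  refine ⟨dense_domain_T2op hn, isSelfAdjoint_adjoint_of_isFormalAdjoint (dense_domain_T2op hn)
    isFormalAdjoint_T2op fun ζ hζ w hw => ?_⟩
  have conj_w_ae_zero := h ζ hζ (fun x => conj (w x)) (Lp.memLp w).star fun φ hφ => by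
    obtain ⟨x, hx, hTx⟩ := hφ.exists_mem_domain c
    have inner_eq_zero := hw x
    rw [inner_eq_integral_of_ae EventuallyEq.rfl
      ((Lp.coeFn_sub _ _).trans (hTx.sub ((Lp.coeFn_smul _ _).trans (hx.const_smul ζ))))]
      at inner_eq_zero
    simpa only [Pi.sub_apply, Pi.smul_apply, smul_eq_mul, mul_comm] using inner_eq_zero
  rw [Lp.eq_zero_iff_ae_eq_zero]
  filter_upwards [conj_w_ae_zero] with a ha
  exact (map_eq_zero (starRingEnd ℂ)).1 ha

theorem integral_T2form_mul_eq_of_essentiallySelfAdjoint (h : EssentiallySelfAdjoint (T2op n c))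
    {u v : 𝔼 n → ℂ} (hu : SmoothOff u) (hv : SmoothOff v) (hu₂ : MemLp u 2) (hv₂ : MemLp v 2)
    (hTu : MemLp (T2form c u) 2) (hTv : MemLp (T2form c v) 2) :
    ∫ x, T2form c u x * v x = ∫ x, u x * T2form c v x := by
  have conj_u : MemLp (fun x => conj (u x)) 2 := hu₂.star
  have conj_Tu : MemLp (T2form c fun x => conj (u x)) 2 := by
    rw [T2form_conj]
    exact hTu.star
  have := inner_eq_inner_of_isSelfAdjoint_adjoint h.1 h.2 (hu.conj.inner_T2op conj_u conj_Tu)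
    (hv.inner_T2op hv₂ hTv)
  rw [inner_eq_integral_of_ae conj_Tu.coeFn_toLp hv₂.coeFn_toLp,
    inner_eq_integral_of_ae conj_u.coeFn_toLp hTv.coeFn_toLp, T2form_conj] at this
  simpa only [Complex.conj_conj, mul_comm] using this

end Operator

section Radial

variable {ψ g : ℝ → ℂ} {f : ℕ → ℝ → ℂ}

/-- The derivative `r⁻¹ d/dr` with respect to `r² / 2`, written in the variable `s = log r`. -/
def radialDeriv (ψ : ℝ → ℂ) (s : ℝ) : ℂ :=
  Real.exp (-2 * s) * deriv ψ s

/-- The radial Laplacian `d²/dr² + ((N - 1) / r) d/dr` in dimension `N`, written in the variable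
`s = log r`. -/
def radialOp (N : ℝ) (ψ : ℝ → ℂ) (s : ℝ) : ℂ :=
  Real.exp (-2 * s) * (deriv (deriv ψ) s + (N - 2) * deriv ψ s)

lemma contDiff_exp_mul (b : ℝ) : ContDiff ℝ ∞ fun s : ℝ => (Real.exp (b * s) : ℂ) := by
  have : ContDiff ℝ ∞ fun s : ℝ => Real.exp (b * s) := by fun_prop
  exact Complex.ofRealCLM.contDiff.comp this

lemma contDiff_radialDeriv (hψ : ContDiff ℝ ∞ ψ) : ContDiff ℝ ∞ (radialDeriv ψ) :=
  (contDiff_exp_mul (-2)).mul (contDiff_infty_iff_deriv.1 hψ).2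

lemma contDiff_radialOp (hψ : ContDiff ℝ ∞ ψ) (N : ℝ) : ContDiff ℝ ∞ (radialOp N ψ) := by
  have deriv_ψ := (contDiff_infty_iff_deriv.1 hψ).2
  exact (contDiff_exp_mul (-2)).mul
    ((contDiff_infty_iff_deriv.1 deriv_ψ).2.add (contDiff_const.mul deriv_ψ))

lemma hasCompactSupport_radialOp (hψ : HasCompactSupport ψ) (N : ℝ) :
    HasCompactSupport (radialOp N ψ) :=
  (HasCompactSupport.add hψ.deriv.deriv hψ.deriv.mul_left).mul_left

lemma isJet_iteratedDeriv (hg : ContDiff ℝ ∞ g) : IsJet fun k => iteratedDeriv k g :=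
  fun k s => by
    simpa only [iteratedDeriv_succ] using
      ((contDiff_iteratedDeriv hg k).differentiable (by simp) s).hasDerivAt

lemma hasDerivAt_exp_mul_mul {ψ' : ℂ} {s : ℝ} (hψ : HasDerivAt ψ ψ' s) (α : ℝ) :
    HasDerivAt (fun s => Real.exp (α * s) * ψ s) (Real.exp (α * s) * (ψ' + α * ψ s)) s := by
  have exp_deriv : HasDerivAt (fun s : ℝ => (Real.exp (α * s) : ℂ))
      ((Real.exp (α * s) * (α * 1) : ℝ) : ℂ) s :=
    (((hasDerivAt_id s).const_mul α).exp).ofReal_comp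
  refine (exp_deriv.mul hψ).congr_deriv ?_
  push_cast
  ring

lemma IsJet.deriv_exp_mul (hf : IsJet f) (α : ℝ) :
    deriv (fun s => Real.exp (α * s) * f 0 s) =
      fun s => Real.exp (α * s) * (f 1 s + α * f 0 s) :=
  funext fun s => (hasDerivAt_exp_mul_mul (hf 0 s) α).deriv

lemma IsJet.radialOp_exp_mul (hf : IsJet f) (N α : ℝ) :
    radialOp N (fun s => Real.exp (α * s) * f 0 s) = fun s =>
      Real.exp ((α - 2) * s) * quadraticOp (2 * α + N - 2) (α ^ 2 + (N - 2) * α) f 0 s := by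
  ext s
  have first : HasDerivAt (fun s => f 1 s + α * f 0 s) (f 2 s + α * f 1 s) s :=
    (hf 1 s).add ((hf 0 s).const_mul _)
  rw [radialOp, hf.deriv_exp_mul, (hasDerivAt_exp_mul_mul first α).deriv, quadraticOp,
    show (α - 2) * s = -2 * s + α * s by ring, Real.exp_add]
  push_cast
  ring

/-- The coefficient `A` for which `r ^ 2 * Δ` acts as `∂ₛ² + 2 ∂ₛ + A` in the logarithmic radial
variable on radial functions of `ℝᴺ`, after conjugation by `r ^ ((4 - N) / 2)`. The harmonic
polynomials of degree `k` on `ℝⁿ` lead to `N = n + 2 * k`. -/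
def sectorConst (N : ℝ) : ℝ := N * (4 - N) / 4

-- With the exponent `(4 - N) / 2` the two quadratic factors have opposite first-order terms.
lemma radialOp_radialOp_exp_mul (hg : ContDiff ℝ ∞ g) (N : ℝ) :
    radialOp N (radialOp N fun s => Real.exp ((4 - N) / 2 * s) * g s) =
      fun s => Real.exp (((4 - N) / 2 - 4) * s) *
        quarticOp (2 * sectorConst N - 4) (sectorConst N ^ 2) g s := by
  have jet := isJet_iteratedDeriv hg
  have inner_factor := jet.radialOp_exp_mul N ((4 - N) / 2)
  have outer_factor :=
    (jet.isJet_quadraticOp 2 (sectorConst N)).radialOp_exp_mul N ((4 - N) / 2 - 2)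
  rw [show 2 * ((4 - N) / 2) + N - 2 = 2 by ring,
    show ((4 - N) / 2) ^ 2 + (N - 2) * ((4 - N) / 2) = sectorConst N by
      rw [sectorConst]; ring] at inner_factor
  rw [show 2 * ((4 - N) / 2 - 2) + N - 2 = -2 by ring, show ((4 - N) / 2 - 2) ^ 2 +
    (N - 2) * ((4 - N) / 2 - 2) = sectorConst N by rw [sectorConst]; ring] at outer_factor
  simp only [iteratedDeriv_zero] at inner_factor
  rw [inner_factor, outer_factor]
  ext s
  have product := quadraticOp_quadraticOp_neg (-2) (sectorConst N) (fun k => iteratedDeriv k g) s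
  rw [neg_neg] at product
  rw [product, quarticOp, show (4 - N) / 2 - 2 - 2 = (4 - N) / 2 - 4 by ring]
  simp only [iteratedDeriv_zero, Pi.add_apply, Pi.smul_apply, Complex.real_smul]
  push_cast
  ring

lemma radialOp_radialOp_exp_mul_add (hg : ContDiff ℝ ∞ g) (N c : ℝ) :
    (radialOp N (radialOp N fun s => Real.exp ((4 - N) / 2 * s) * g s) +
      fun s => c * Real.exp (-4 * s) * (Real.exp ((4 - N) / 2 * s) * g s)) =
      fun s => Real.exp (((4 - N) / 2 - 4) * s) *
        quarticOp (2 * sectorConst N - 4) (sectorConst N ^ 2 + c) g s := by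
  rw [radialOp_radialOp_exp_mul hg]
  ext s
  simp only [quarticOp, Pi.add_apply, Pi.smul_apply, Complex.real_smul]
  rw [show ((4 - N) / 2 - 4) * s = -4 * s + (4 - N) / 2 * s by ring, Real.exp_add]
  push_cast
  ring

end Radial

section Rad

variable {n k : ℕ} {a x : 𝔼 n} {ψ χ g : ℝ → ℂ}

/-- The function `⟨a, x⟩^k ψ(log ‖x‖)`, extended by `0` to the origin; together these functions
replace a decomposition into spherical harmonics. -/
def rad (k : ℕ) (a : 𝔼 n) (ψ : ℝ → ℂ) (x : 𝔼 n) : ℂ :=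
  if x = 0 then 0 else ((inner ℝ a x : ℝ) : ℂ) ^ k * ψ (Real.log ‖x‖)

lemma rad_of_ne (hx : x ≠ 0) : rad k a ψ x = ((inner ℝ a x : ℝ) : ℂ) ^ k * ψ (Real.log ‖x‖) :=
  if_neg hx

lemma rad_add : rad k a (ψ + χ) = rad k a ψ + rad k a χ := by
  ext x
  by_cases hx : x = 0
  · simp [rad, hx]
  · simp [rad, hx, mul_add]

lemma exp_nat_mul_log_norm (m : ℕ) (hx : x ≠ 0) : Real.exp (m * Real.log ‖x‖) = ‖x‖ ^ m := by
  rw [Real.exp_nat_mul, Real.exp_log (norm_pos_iff.2 hx)]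

lemma exp_neg_nat_mul_log_norm (m : ℕ) (hx : x ≠ 0) :
    Real.exp (-m * Real.log ‖x‖) = (‖x‖ ^ m)⁻¹ := by
  rw [neg_mul, Real.exp_neg, exp_nat_mul_log_norm m hx]

lemma smoothOff_rad (hψ : ContDiff ℝ ∞ ψ) : SmoothOff (rad k a ψ) := by
  have inner_pow : ContDiff ℝ ∞ fun x : 𝔼 n => ((inner ℝ a x : ℝ) : ℂ) ^ k :=
    (Complex.ofRealCLM.contDiff.comp (contDiff_const.inner ℝ contDiff_id)).pow k
  have log_norm : ContDiffOn ℝ ∞ (fun x : 𝔼 n => Real.log ‖x‖) {0}ᶜ := fun x hx =>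
    ((contDiffAt_norm ℝ hx).log (norm_ne_zero_iff.2 hx)).contDiffWithinAt
  exact (inner_pow.contDiffOn.mul (hψ.comp_contDiffOn log_norm)).congr fun x hx => rad_of_ne hx

lemma exists_tsupport_rad_subset (hψ : HasCompactSupport ψ) :
    ∃ R : ℝ, tsupport (rad k a ψ) ⊆ {x | Real.exp (-R) ≤ ‖x‖ ∧ ‖x‖ ≤ Real.exp R} := by
  obtain ⟨R, hR⟩ := hψ.isCompact.isBounded.subset_closedBall 0
  refine ⟨R, closure_minimal (fun x hx => ?_) ((isClosed_le continuous_const continuous_norm).inter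
    (isClosed_le continuous_norm continuous_const))⟩
  have hx₀ : x ≠ 0 := fun h => hx (if_pos h)
  rw [Function.mem_support, rad_of_ne hx₀] at hx
  have log_mem := hR (subset_tsupport _ (right_ne_zero_of_mul hx))
  rw [mem_closedBall_zero_iff, Real.norm_eq_abs, abs_le] at log_mem
  have norm_pos : 0 < ‖x‖ := norm_pos_iff.2 hx₀
  exact ⟨(Real.le_log_iff_exp_le norm_pos).1 log_mem.1,
    (Real.log_le_iff_le_exp norm_pos).1 log_mem.2⟩

lemma isTest_rad (hψ : ContDiff ℝ ∞ ψ) (hc : HasCompactSupport ψ) : IsTest (rad k a ψ) := by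
  obtain ⟨R, hR⟩ := exists_tsupport_rad_subset (k := k) (a := a) hc
  refine .of_smoothOff (smoothOff_rad hψ) ?_ fun h₀ => ?_
  · refine (isCompact_closedBall (0 : 𝔼 n) (Real.exp R)).of_isClosed_subset (isClosed_tsupport _)
      fun x hx => ?_
    simpa only [mem_closedBall_zero_iff] using (hR hx).2
  · have exp_le := (hR h₀).1
    rw [norm_zero] at exp_le
    exact (Real.exp_pos _).not_ge exp_le

lemma hasFDerivAt_log_norm (hx : x ≠ 0) :
    HasFDerivAt (fun x : 𝔼 n => Real.log ‖x‖) ((‖x‖ ^ 2)⁻¹ • innerSL ℝ x) x := by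
  have log_eq : (fun x : 𝔼 n => Real.log ‖x‖) = fun x => (1 / 2) * Real.log (‖x‖ ^ 2) := by
    ext y
    rw [Real.log_pow]
    push_cast
    ring
  have norm_ne : ‖x‖ ^ 2 ≠ 0 := pow_ne_zero 2 (norm_ne_zero_iff.2 hx)
  rw [log_eq]
  refine (((hasStrictFDerivAt_norm_sq x).hasFDerivAt.log norm_ne).const_mul (1 / 2)).congr_fderiv ?_
  ext w
  simp only [smul_apply, smul_eq_mul]
  ring

lemma hasFDerivAt_ofReal_inner (a x : 𝔼 n) :
    HasFDerivAt (fun x : 𝔼 n => ((inner ℝ a x : ℝ) : ℂ))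
      (Complex.ofRealCLM.comp (innerSL ℝ a)) x :=
  Complex.ofRealCLM.hasFDerivAt.comp x (innerSL ℝ a).hasFDerivAt

lemma fderiv_rad (hψ : Differentiable ℝ ψ) (hx : x ≠ 0) (v : 𝔼 n) :
    fderiv ℝ (rad k a ψ) x v = k * (inner ℝ a v : ℝ) * rad (k - 1) a ψ x +
      (inner ℝ x v : ℝ) * rad k a (radialDeriv ψ) x := by
  have product := ((hasFDerivAt_ofReal_inner a x).pow k).mul
    ((hψ (Real.log ‖x‖)).hasDerivAt.hasFDerivAt.comp x (hasFDerivAt_log_norm hx))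
  have rad_eq : rad k a ψ =ᶠ[𝓝 x]
      (fun x : 𝔼 n => ((inner ℝ a x : ℝ) : ℂ) ^ k) * (ψ ∘ fun x => Real.log ‖x‖) := by
    filter_upwards [isOpen_compl_singleton.mem_nhds hx] with y hy using rad_of_ne hy
  have exp_eq : Real.exp (-2 * Real.log ‖x‖) = (‖x‖ ^ 2)⁻¹ :=
    mod_cast exp_neg_nat_mul_log_norm 2 hx
  rw [rad_eq.fderiv_eq, product.fderiv, rad_of_ne hx, rad_of_ne hx, radialDeriv, exp_eq]
  simp only [ContinuousLinearMap.comp_smulₛₗ, map_inv₀, Real.ringHom_apply, Function.comp_apply,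
    nsmul_eq_mul, add_apply, smul_apply, ContinuousLinearMap.comp_apply, coe_innerSL_apply,
    ContinuousLinearMap.toSpanSingleton_apply, Complex.real_smul, Complex.ofReal_inv,
    Complex.ofReal_pow, smul_eq_mul, Complex.ofRealCLM_apply]
  ring

lemma fderiv_fderiv_rad (hψ : ContDiff ℝ ∞ ψ) (hx : x ≠ 0) (v : 𝔼 n) :
    fderiv ℝ (fun y => fderiv ℝ (rad k a ψ) y v) x v =
      (k * (k - 1) * rad (k - 2) a ψ x) * ((inner ℝ a v : ℝ) * (inner ℝ a v : ℝ)) +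
      (2 * k * rad (k - 1) a (radialDeriv ψ) x) * ((inner ℝ a v : ℝ) * (inner ℝ x v : ℝ)) +
      rad k a (radialDeriv ψ) x * (inner ℝ v v : ℝ) +
      rad k a (radialDeriv (radialDeriv ψ)) x * ((inner ℝ x v : ℝ) * (inner ℝ x v : ℝ)) := by
  have hψ' := contDiff_radialDeriv hψ
  have first : (fun y => fderiv ℝ (rad k a ψ) y v) =ᶠ[𝓝 x] fun y =>
      (k * (inner ℝ a v : ℝ) : ℂ) * rad (k - 1) a ψ y +
        (inner ℝ y v : ℝ) * rad k a (radialDeriv ψ) y := by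
    filter_upwards [isOpen_compl_singleton.mem_nhds hx] with y hy using
      fderiv_rad (hψ.differentiable (by simp)) hy v
  have inner_deriv : HasFDerivAt (fun y : 𝔼 n => ((inner ℝ y v : ℝ) : ℂ))
      (Complex.ofRealCLM.comp (innerSL ℝ v)) x := by
    simpa only [real_inner_comm] using hasFDerivAt_ofReal_inner v x
  have rad_deriv (j : ℕ) {χ : ℝ → ℂ} (hχ : ContDiff ℝ ∞ χ) :
      HasFDerivAt (rad j a χ) (fderiv ℝ (rad j a χ) x) x :=
    ((smoothOff_rad hχ).differentiableAt hx).hasFDerivAt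
  have second := ((rad_deriv (k - 1) hψ).const_mul (k * (inner ℝ a v : ℝ) : ℂ)).add
    (inner_deriv.mul (rad_deriv k hψ'))
  rw [first.fderiv_eq]
  refine (DFunLike.congr_fun second.fderiv v).trans ?_
  simp only [add_apply, smul_apply, smul_eq_mul, ContinuousLinearMap.comp_apply,
    innerSL_apply_apply, Complex.ofRealCLM_apply, fderiv_rad (hψ.differentiable (by simp)) hx,
    fderiv_rad (hψ'.differentiable (by simp)) hx, Nat.sub_sub]
  rcases k with _ | k
  · simp only [CharP.cast_eq_zero, zero_mul, zero_tsub, Nat.reduceAdd, zero_add,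
      inner_self_eq_norm_sq_to_K, Real.ringHom_apply, Complex.ofReal_pow, zero_sub, mul_neg,
      mul_one, neg_zero, mul_zero, add_zero]
    ring
  · push_cast
    simp only [inner_self_eq_norm_sq_to_K, Real.ringHom_apply, Complex.ofReal_pow,
      add_sub_cancel_right]
    ring

lemma radialDeriv_radialDeriv (hψ : ContDiff ℝ ∞ ψ) (s : ℝ) :
    radialDeriv (radialDeriv ψ) s =
      Real.exp (-2 * s) * (Real.exp (-2 * s) * (deriv (deriv ψ) s - 2 * deriv ψ s)) := by
  have := ((contDiff_infty_iff_deriv.1 hψ).2.differentiable (by simp) s).hasDerivAt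
  have := (hasDerivAt_exp_mul_mul this (-2)).deriv
  rw [radialDeriv, show radialDeriv ψ = fun s => Real.exp (-2 * s) * deriv ψ s from rfl, this]
  push_cast
  ring

lemma laplacian_rad (hψ : ContDiff ℝ ∞ ψ) (hx : x ≠ 0) :
    laplacian (rad k a ψ) x = rad k a (radialOp (n + 2 * k) ψ) x +
      (k * (k - 1) * ‖a‖ ^ 2 : ℂ) * rad (k - 2) a ψ x := by
  have sum_inner_mul_inner (y z : 𝔼 n) :
      ∑ i, ((inner ℝ y (EuclideanSpace.single i (1 : ℝ)) : ℝ) *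
        (inner ℝ z (EuclideanSpace.single i (1 : ℝ)) : ℝ) : ℂ) = (inner ℝ y z : ℝ) := by
    simp [PiLp.inner_apply, mul_comm]
  have sum_norm_sq : ∑ i : Fin n, ((inner ℝ (EuclideanSpace.single i (1 : ℝ))
      (EuclideanSpace.single i (1 : ℝ)) : ℝ) : ℂ) = n := by simp
  have exp_mul_norm_sq : (Real.exp (-2 * Real.log ‖x‖) : ℂ) * ‖x‖ ^ 2 = 1 := by
    have exp_eq := exp_neg_nat_mul_log_norm 2 hx
    have norm_ne := norm_ne_zero_iff.2 hx
    rw [Nat.cast_ofNat] at exp_eq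
    rw [exp_eq]
    push_cast
    exact inv_mul_cancel₀ (mod_cast pow_ne_zero 2 norm_ne)
  have euler : (k : ℂ) * ((inner ℝ a x : ℝ) : ℂ) ^ (k - 1) * (inner ℝ a x : ℝ) =
      k * ((inner ℝ a x : ℝ) : ℂ) ^ k := by
    rcases k with _ | k
    · simp
    · rw [Nat.add_sub_cancel, pow_succ, mul_assoc]
  simp only [laplacian, fderiv_fderiv_rad hψ hx, Finset.sum_add_distrib, ← Finset.mul_sum]
  rw [sum_inner_mul_inner, sum_inner_mul_inner, sum_inner_mul_inner, sum_norm_sq]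
  simp only [rad_of_ne hx, real_inner_self_eq_norm_sq, radialDeriv_radialDeriv hψ, radialOp]
  rw [radialDeriv]
  set e := (Real.exp (-2 * Real.log ‖x‖) : ℂ)
  push_cast
  linear_combination 2 * e * deriv ψ (Real.log ‖x‖) * euler +
    ((inner ℝ a x : ℝ) : ℂ) ^ k * e *
      (deriv (deriv ψ) (Real.log ‖x‖) - 2 * deriv ψ (Real.log ‖x‖)) * exp_mul_norm_sq

lemma T2form_rad (c : ℝ) (hψ : ContDiff ℝ ∞ ψ) (hx : x ≠ 0) :
    T2form c (rad k a ψ) x =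
      rad k a (radialOp (n + 2 * k) (radialOp (n + 2 * k) ψ) +
        fun s => c * Real.exp (-4 * s) * ψ s) x +
      (k * (k - 1) * ‖a‖ ^ 2 : ℂ) * (rad (k - 2) a (radialOp (n + 2 * k) ψ +
        radialOp (n + 2 * (k - 2 : ℕ)) ψ) x +
        ((k - 2 : ℕ) * ((k - 2 : ℕ) - 1) * ‖a‖ ^ 2 : ℂ) * rad (k - 4) a ψ x) := by
  have laplacian_eq : laplacian (rad k a ψ) =ᶠ[𝓝 x] rad k a (radialOp (n + 2 * k) ψ) +
      (k * (k - 1) * ‖a‖ ^ 2 : ℂ) • rad (k - 2) a ψ := by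
    filter_upwards [isOpen_compl_singleton.mem_nhds hx] with y hy using laplacian_rad hψ hy
  have exp_eq : Real.exp (-4 * Real.log ‖x‖) = (‖x‖ ^ 4)⁻¹ :=
    mod_cast exp_neg_nat_mul_log_norm 4 hx
  rw [T2form, laplacian_congr laplacian_eq,
    (smoothOff_rad (contDiff_radialOp hψ _)).laplacian_add ((smoothOff_rad hψ).const_smul _) hx,
    laplacian_const_smul, Pi.smul_apply, laplacian_rad hψ hx,
    laplacian_rad (contDiff_radialOp hψ _) hx, rad_add, rad_add]
  simp only [Pi.add_apply, smul_eq_mul, rad_of_ne hx, Nat.sub_sub, exp_eq]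
  push_cast
  ring

lemma T2form_rad_zero_exp_mul (c : ℝ) (hg : ContDiff ℝ ∞ g) (hx : x ≠ 0) :
    T2form c (rad 0 a fun s => Real.exp ((4 - n) / 2 * s) * g s) x =
      rad 0 a (fun s => Real.exp (((4 - n) / 2 - 4) * s) *
        quarticOp (2 * sectorConst n - 4) (sectorConst n ^ 2 + c) g s) x := by
  rw [T2form_rad c ((contDiff_exp_mul _).mul hg) hx,
    ← radialOp_radialOp_exp_mul_add hg n c]
  simp

end Rad

section Adjoint

variable {X Y : Type*} [MeasurableSpace X] [MeasurableSpace Y] {μ : Measure X} {ν : Measure Y}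
  {T : X → Y} {v : X → ℂ}

-- `K` comes from the adjoint of the isometry `f ↦ f ∘ T`.
lemma exists_memLp_integral_mul_comp (hT : MeasurePreserving T μ ν) (hv : MemLp v 2 μ) :
    ∃ K : Y → ℂ, MemLp K 2 ν ∧
      ∀ f, MemLp f 2 ν → ∫ x, v x * f (T x) ∂μ = ∫ y, K y * f y ∂ν := by
  let U := (Lp.compMeasurePreservingₗᵢ (E := ℂ) (p := 2) ℂ T hT).toContinuousLinearMap
  let V := MemLp.toLp _ hv.star
  refine ⟨fun y => conj (U.adjoint V y), (Lp.memLp (U.adjoint V)).star, fun f hf => ?_⟩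
  have comp_ae : U (hf.toLp f) =ᵐ[μ] f ∘ T := (hf.comp_measurePreserving hT).coeFn_toLp
  have adjoint_eq := U.adjoint_inner_left (hf.toLp f) V
  rw [inner_eq_integral_of_ae .rfl hf.coeFn_toLp,
    inner_eq_integral_of_ae hv.star.coeFn_toLp comp_ae] at adjoint_eq
  simpa only [Function.comp_apply, Pi.star_apply, RCLike.star_def, Complex.conj_conj,
    mul_comm (f _)] using adjoint_eq.symm

end Adjoint

section PolarCoordinates

/-- The measure `‖x‖⁻ⁿ dx` on `ℝⁿ`, which is invariant under dilations. -/
def conicMeasure (n : ℕ) : Measure (𝔼 n) :=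
  volume.withDensity fun x => ENNReal.ofReal ((‖x‖ ^ n)⁻¹)

/-- The surface area of the unit sphere of `ℝⁿ`. -/
def sphereArea (n : ℕ) : ℝ :=
  (volume : Measure (𝔼 n)).toSphere.real Set.univ

variable {n : ℕ} {s t : ℝ} {E : Type*} [NormedAddCommGroup E] [NormedSpace ℝ E]

lemma nontrivial_euclideanSpace (hn : n ≠ 0) : Nontrivial (𝔼 n) :=
  have : Nonempty (Fin n) := ⟨0, Nat.pos_of_ne_zero hn⟩
  inferInstance

lemma ae_ne_zero (hn : n ≠ 0) : ∀ᵐ x : 𝔼 n, x ≠ 0 :=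
  have := nontrivial_euclideanSpace hn
  Measure.ae_ne volume 0

lemma sphereArea_pos (hn : n ≠ 0) : 0 < sphereArea n := by
  have := nontrivial_euclideanSpace hn
  exact ENNReal.toReal_pos (Measure.measure_univ_ne_zero.2 (Measure.toSphere_ne_zero _))
    (measure_ne_top _ _)

lemma pow_sub_one_smul_indicator_inv_pow (hn : n ≠ 0) {S : Set ℝ} (hS : S ⊆ Set.Ioi 0) (y : ℝ) :
    y ^ (n - 1) • S.indicator (fun y => (y ^ n)⁻¹) y = S.indicator (fun y => y⁻¹) y := by
  by_cases hy : y ∈ S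
  · have y_pos : 0 < y := hS hy
    obtain ⟨m, rfl⟩ := Nat.exists_eq_succ_of_ne_zero hn
    rw [Set.indicator_of_mem hy, Set.indicator_of_mem hy, smul_eq_mul, Nat.succ_sub_one,
      pow_succ]
    field_simp
  · rw [Set.indicator_of_notMem hy, Set.indicator_of_notMem hy, smul_zero]

lemma Ioc_exp_subset_Ioi : Set.Ioc (Real.exp s) (Real.exp t) ⊆ Set.Ioi 0 := fun _ hy =>
  (Real.exp_pos s).trans hy.1

lemma integrable_indicator_Ioc_exp_norm (hn : n ≠ 0) (s t : ℝ) :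
    Integrable fun x : 𝔼 n =>
      (Set.Ioc (Real.exp s) (Real.exp t)).indicator (fun y => (y ^ n)⁻¹) ‖x‖ := by
  have := nontrivial_euclideanSpace hn
  rw [integrable_fun_norm_addHaar, finrank_euclideanSpace_fin]
  simp only [pow_sub_one_smul_indicator_inv_pow hn Ioc_exp_subset_Ioi]
  refine ((integrable_indicator_iff measurableSet_Ioc).2 ?_).integrableOn
  refine (ContinuousOn.integrableOn_Icc ?_).mono_set Set.Ioc_subset_Icc_self
  exact continuousOn_inv₀.mono fun y hy => ((Real.exp_pos s).trans_le hy.1).ne'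

lemma integral_indicator_Ioc_exp_norm (hn : n ≠ 0) (hst : s ≤ t) :
    ∫ x : 𝔼 n, (Set.Ioc (Real.exp s) (Real.exp t)).indicator (fun y => (y ^ n)⁻¹) ‖x‖ =
      sphereArea n * (t - s) := by
  have := nontrivial_euclideanSpace hn
  rw [integral_fun_norm_addHaar, finrank_euclideanSpace_fin]
  simp only [pow_sub_one_smul_indicator_inv_pow hn Ioc_exp_subset_Ioi]
  rw [setIntegral_indicator measurableSet_Ioc,
    Set.inter_eq_self_of_subset_right Ioc_exp_subset_Ioi,
    ← intervalIntegral.integral_of_le (Real.exp_le_exp.2 hst),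
    integral_inv_of_pos (Real.exp_pos _) (Real.exp_pos _), ← Real.exp_sub, Real.log_exp,
    sphereArea, Measure.toSphere_real_apply_univ, finrank_euclideanSpace_fin]
  simp [mul_assoc]

lemma conicMeasure_preimage_log_norm_Ioc (hn : n ≠ 0) (hst : s ≤ t) :
    conicMeasure n ((fun x => Real.log ‖x‖) ⁻¹' Set.Ioc s t) =
      ENNReal.ofReal (sphereArea n * (t - s)) := by
  have measurable_preimage : MeasurableSet ((fun x : 𝔼 n => Real.log ‖x‖) ⁻¹' Set.Ioc s t) :=
    measurableSet_Ioc.preimage (by fun_prop)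
  rw [conicMeasure, withDensity_apply _ measurable_preimage,
    ← integral_indicator_Ioc_exp_norm hn hst,
    ofReal_integral_eq_lintegral_ofReal (integrable_indicator_Ioc_exp_norm hn s t)
      (.of_forall fun x => Set.indicator_nonneg (fun y hy =>
        inv_nonneg.2 (pow_nonneg (Ioc_exp_subset_Ioi hy).le n)) _),
    ← lintegral_indicator measurable_preimage]
  refine lintegral_congr_ae ?_
  filter_upwards [ae_ne_zero hn] with x hx
  have norm_pos : 0 < ‖x‖ := norm_pos_iff.2 hx
  have mem_iff : x ∈ (fun x => Real.log ‖x‖) ⁻¹' Set.Ioc s t ↔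
      ‖x‖ ∈ Set.Ioc (Real.exp s) (Real.exp t) := by
    rw [Set.mem_preimage, Set.mem_Ioc, Set.mem_Ioc, Real.lt_log_iff_exp_lt norm_pos,
      Real.log_le_iff_le_exp norm_pos]
  by_cases hx : ‖x‖ ∈ Set.Ioc (Real.exp s) (Real.exp t)
  · rw [Set.indicator_of_mem (mem_iff.2 hx), Set.indicator_of_mem hx]
  · rw [Set.indicator_of_notMem (mt mem_iff.1 hx), Set.indicator_of_notMem hx, ENNReal.ofReal_zero]

lemma measurePreserving_log_norm (hn : n ≠ 0) :
    MeasurePreserving (fun x : 𝔼 n => Real.log ‖x‖) (conicMeasure n)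
      (ENNReal.ofReal (sphereArea n) • volume) := by
  have measurable_log_norm : Measurable fun x : 𝔼 n => Real.log ‖x‖ := by fun_prop
  refine ⟨measurable_log_norm, (Measure.ext_of_Ioc' _ _ (fun s t _ => ?_) fun s t hst => ?_).symm⟩
  · simpa using ENNReal.mul_ne_top ENNReal.ofReal_ne_top ENNReal.ofReal_ne_top
  · rw [Measure.map_apply measurable_log_norm measurableSet_Ioc,
      conicMeasure_preimage_log_norm_Ioc hn hst.le, ENNReal.ofReal_mul (sphereArea_pos hn).le]
    simp

lemma integral_conicMeasure (f : 𝔼 n → E) :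
    ∫ x, f x ∂(conicMeasure n) = ∫ x, (‖x‖ ^ n)⁻¹ • f x := by
  rw [conicMeasure, integral_withDensity_eq_integral_toReal_smul (by fun_prop) (by simp)]
  congr with x
  rw [ENNReal.toReal_ofReal (by positivity)]

lemma integrable_conicMeasure {f : 𝔼 n → E} :
    Integrable f (conicMeasure n) ↔ Integrable fun x => (‖x‖ ^ n)⁻¹ • f x := by
  rw [conicMeasure, integrable_withDensity_iff_integrable_smul' (by fun_prop) (by simp)]
  simp only [ENNReal.toReal_ofReal (inv_nonneg.2 (pow_nonneg (norm_nonneg _) n))]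

lemma inv_norm_pow_smul_exp_smul {x : 𝔼 n} (hx : x ≠ 0) (y : E) :
    (‖x‖ ^ n)⁻¹ • Real.exp (n * Real.log ‖x‖) • y = y := by
  rw [exp_nat_mul_log_norm n hx, inv_smul_smul₀ (pow_ne_zero n (norm_ne_zero_iff.2 hx))]

lemma integral_comp_log_norm (hn : n ≠ 0) {f : ℝ → E} (hf : Continuous f) :
    ∫ x : 𝔼 n, f (Real.log ‖x‖) = sphereArea n • ∫ s, Real.exp (n * s) • f s := by
  have log_norm := measurePreserving_log_norm hn
  have continuous_exp_smul : Continuous fun s => Real.exp (n * s) • f s := by fun_prop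
  have map_eq := integral_map (μ := conicMeasure n) log_norm.measurable.aemeasurable
    continuous_exp_smul.stronglyMeasurable.aestronglyMeasurable
  rw [log_norm.map_eq, integral_smul_measure, ENNReal.toReal_ofReal (sphereArea_pos hn).le,
    integral_conicMeasure] at map_eq
  rw [map_eq]
  refine integral_congr_ae ?_
  filter_upwards [ae_ne_zero hn] with x hx using (inv_norm_pow_smul_exp_smul hx _).symm

lemma integrable_comp_log_norm (hn : n ≠ 0) {f : ℝ → E}
    (hf : Integrable fun s => Real.exp (n * s) • f s) :
    Integrable fun x : 𝔼 n => f (Real.log ‖x‖) := by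
  have comp_integrable := (measurePreserving_log_norm hn).integrable_comp_of_integrable
    (hf.smul_measure ENNReal.ofReal_ne_top)
  rw [integrable_conicMeasure] at comp_integrable
  refine comp_integrable.congr ?_
  filter_upwards [ae_ne_zero hn] with x hx using inv_norm_pow_smul_exp_smul hx _

lemma memLp_conicMeasure_exp_smul (hn : n ≠ 0) {w : 𝔼 n → E} (hw : MemLp w 2) :
    MemLp (fun x => Real.exp (n / 2 * Real.log ‖x‖) • w x) 2 (conicMeasure n) := by
  have measurable : AEStronglyMeasurable
      (fun x => Real.exp (n / 2 * Real.log ‖x‖) • w x) (conicMeasure n) :=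
    ((by fun_prop : Measurable fun x : 𝔼 n => Real.exp (n / 2 * Real.log ‖x‖)).aestronglyMeasurable
      |>.smul hw.aestronglyMeasurable).mono_ac (withDensity_absolutelyContinuous _ _)
  rw [memLp_two_iff_integrable_sq_norm measurable, integrable_conicMeasure]
  refine ((memLp_two_iff_integrable_sq_norm hw.aestronglyMeasurable).1 hw).congr ?_
  filter_upwards [ae_ne_zero hn] with x hx
  have exp_sq : Real.exp (n / 2 * Real.log ‖x‖) ^ 2 = Real.exp (n * Real.log ‖x‖) := by
    rw [← Real.exp_nat_mul]
    congr 1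
    push_cast
    ring
  rw [norm_smul, mul_pow, Real.norm_of_nonneg (Real.exp_nonneg _), exp_sq,
    ← smul_eq_mul (Real.exp _), inv_norm_pow_smul_exp_smul hx]

lemma rad_mul_eq_angular_mul_radial {x : 𝔼 n} (hx : x ≠ 0) (k : ℕ) (a : 𝔼 n) (ψ : ℝ → ℂ) (z : ℂ) :
    (‖x‖ ^ n)⁻¹ • (((inner ℝ a x / ‖x‖) ^ k : ℝ) * Real.exp (n / 2 * Real.log ‖x‖) • z *
      (Real.exp ((n / 2 + k) * Real.log ‖x‖) * ψ (Real.log ‖x‖))) = z * rad k a ψ x := by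
  have norm_ne := norm_ne_zero_iff.2 hx
  have exp_mul_exp : Real.exp (n / 2 * Real.log ‖x‖) * Real.exp ((n / 2 + k) * Real.log ‖x‖) =
      ‖x‖ ^ n * ‖x‖ ^ k := by
    rw [← Real.exp_add, ← exp_nat_mul_log_norm n hx, ← exp_nat_mul_log_norm k hx, ← Real.exp_add]
    congr 1
    ring
  have norm_ne' : (‖x‖ : ℂ) ≠ 0 := Complex.ofReal_ne_zero.2 norm_ne
  have exp_mul_exp' := congrArg ((↑) : ℝ → ℂ) exp_mul_exp
  rw [Complex.ofReal_mul, Complex.ofReal_mul, Complex.ofReal_pow, Complex.ofReal_pow]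
    at exp_mul_exp'
  calc
    _ = ((‖x‖ : ℂ) ^ n)⁻¹ * ((inner ℝ a x : ℝ) / ‖x‖ : ℂ) ^ k * z * ψ (Real.log ‖x‖) *
        (Real.exp (n / 2 * Real.log ‖x‖) * Real.exp ((n / 2 + k) * Real.log ‖x‖)) := by
      simp only [Complex.real_smul, Complex.ofReal_inv, Complex.ofReal_pow, Complex.ofReal_div]
      ring
    _ = _ := by
      rw [exp_mul_exp', rad_of_ne hx, div_pow]
      field_simp

/-- `K` records the pairings of `w` with the functions `rad k a ψ`. The weight makes `K` square
integrable whenever `w` is. -/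
def IsRadialProfile (k : ℕ) (a : 𝔼 n) (w : 𝔼 n → ℂ) (K : ℝ → ℂ) : Prop :=
  ∀ ψ : ℝ → ℂ, Continuous ψ → HasCompactSupport ψ →
    ∫ x, w x * rad k a ψ x = ∫ s, K s * (Real.exp ((n / 2 + k) * s) * ψ s)

lemma exists_isRadialProfile (hn : n ≠ 0) (k : ℕ) (a : 𝔼 n) {w : 𝔼 n → ℂ} (hw : MemLp w 2) :
    ∃ K, MemLp K 2 ∧ IsRadialProfile k a w K := by
  have area_pos := sphereArea_pos hn
  have area_ne : ENNReal.ofReal (sphereArea n) ≠ 0 := ENNReal.ofReal_ne_zero_iff.2 area_pos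
  have weighted : MemLp (fun x => (((inner ℝ a x / ‖x‖) ^ k : ℝ) : ℂ) *
      Real.exp (n / 2 * Real.log ‖x‖) • w x) 2 (conicMeasure n) := by
    refine .of_le_mul (c := ‖a‖ ^ k) (memLp_conicMeasure_exp_smul hn hw) ?_ (.of_forall fun x => ?_)
    · have measurable_angular : Measurable fun x => (((inner ℝ a x / ‖x‖) ^ k : ℝ) : ℂ) := by
        fun_prop
      exact measurable_angular.aestronglyMeasurable.mul
        (memLp_conicMeasure_exp_smul hn hw).aestronglyMeasurable
    · rw [norm_mul, Complex.norm_real, norm_pow, norm_div, norm_norm]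
      gcongr
      exact div_le_of_le_mul₀ (norm_nonneg x) (norm_nonneg a) (norm_inner_le_norm a x)
  obtain ⟨K, hK, integral_eq⟩ :=
    exists_memLp_integral_mul_comp (measurePreserving_log_norm hn) weighted
  refine ⟨fun s => sphereArea n • K s, ?_, fun ψ hψ hc => ?_⟩
  · have volume_eq : (ENNReal.ofReal (sphereArea n))⁻¹ •
        ENNReal.ofReal (sphereArea n) • (volume : Measure ℝ) = volume := by
      rw [smul_smul, ENNReal.inv_mul_cancel area_ne ENNReal.ofReal_ne_top, one_smul]
    rw [← volume_eq]
    exact (hK.smul_measure (ENNReal.inv_ne_top.2 area_ne)).const_smul (sphereArea n)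
  · have exp_mul_memLp : MemLp (fun s => (Real.exp ((n / 2 + k) * s) : ℂ) * ψ s) 2 :=
      Continuous.memLp_of_hasCompactSupport (by fun_prop) hc.mul_left
    have profile_eq := integral_eq _ (exp_mul_memLp.smul_measure ENNReal.ofReal_ne_top)
    rw [integral_conicMeasure, integral_smul_measure, ENNReal.toReal_ofReal area_pos.le,
      ← integral_smul] at profile_eq
    simp only [smul_mul_assoc]
    rw [← profile_eq]
    refine integral_congr_ae ?_
    filter_upwards [ae_ne_zero hn] with x hx using
      (rad_mul_eq_angular_mul_radial hx k a ψ (w x)).symm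

end PolarCoordinates

section Threshold

variable {A c β p q N : ℝ} {n k : ℕ}

lemma exists_quadratic_roots_le_re (hp : 2 * β ≤ p) (hq : β * p - β ^ 2 ≤ q) :
    ∃ z₁ z₂ : ℂ, β ≤ z₁.re ∧ β ≤ z₂.re ∧ z₁ + z₂ = p ∧ z₁ * z₂ = q := by
  rcases le_total 0 (p ^ 2 - 4 * q) with discr_nonneg | discr_nonpos
  · have sq_sqrt := Real.sq_sqrt discr_nonneg
    have sqrt_nonneg := Real.sqrt_nonneg (p ^ 2 - 4 * q)
    have sqrt_le : √(p ^ 2 - 4 * q) ≤ p - 2 * β :=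
      Real.sqrt_le_iff.2 ⟨by linarith, by nlinarith⟩
    refine ⟨((p + √(p ^ 2 - 4 * q)) / 2 : ℝ), ((p - √(p ^ 2 - 4 * q)) / 2 : ℝ), ?_, ?_, ?_, ?_⟩
    · rw [Complex.ofReal_re]
      linarith
    · rw [Complex.ofReal_re]
      linarith
    · norm_cast
      ring
    · norm_cast
      linear_combination -sq_sqrt / 4
  · have sq_sqrt := Real.sq_sqrt (by linarith : 0 ≤ 4 * q - p ^ 2)
    have le_half : β ≤ p / 2 := by linarith
    refine ⟨⟨p / 2, √(4 * q - p ^ 2) / 2⟩, ⟨p / 2, -(√(4 * q - p ^ 2) / 2)⟩,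
      le_half, le_half, ?_, ?_⟩
    · apply Complex.ext <;> simp
    · apply Complex.ext
      · simp only [Complex.mul_re, Complex.ofReal_re]
        linear_combination sq_sqrt / 4
      · simp only [Complex.mul_im, Complex.ofReal_im]
        ring

/-- The range of `c` for which `(z ^ 2 + A) ^ 2 - 4 * z ^ 2 + c`, the characteristic polynomial of
the operator on one sector, has no root in the strip `|z.re| < 2`. -/
def SectorBound (A c : ℝ) : Prop := -A ^ 2 - 8 * A ≤ c ∧ (A ≤ -6 ∨ 36 + 12 * A ≤ c)

-- The parameters describe `(z ^ 2 + A) ^ 2 - 4 * z ^ 2 + c` as the product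
-- `(z ^ 2 - p * z + q) * (z ^ 2 + p * z + q)`.
lemma SectorBound.exists_factorization (h : SectorBound A c) :
    ∃ (p q : ℝ) (z₁ z₂ : ℂ), 2 ≤ z₁.re ∧ 2 ≤ z₂.re ∧ z₁ + z₂ = p ∧ z₁ * z₂ = q ∧
      2 * q - p ^ 2 = 2 * A - 4 ∧ q ^ 2 = A ^ 2 + c := by
  obtain ⟨lower_bound, small_or_le⟩ := h
  have sq_add_nonneg : 0 ≤ A ^ 2 + c := by
    rcases small_or_le with hA | hA
    · linarith
    · nlinarith [sq_nonneg (A + 6)]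
  obtain ⟨q, q_nonneg, q_sq⟩ : ∃ q : ℝ, 0 ≤ q ∧ q ^ 2 = A ^ 2 + c :=
    ⟨_, Real.sqrt_nonneg _, Real.sq_sqrt sq_add_nonneg⟩
  have add_six_le : A + 6 ≤ q := by
    rcases small_or_le with hA | hA
    · linarith
    · exact (abs_le_of_sq_le_sq' (by nlinarith) q_nonneg).2
  obtain ⟨p, p_nonneg, p_sq⟩ : ∃ p : ℝ, 0 ≤ p ∧ p ^ 2 = 2 * q + 4 - 2 * A :=
    ⟨_, Real.sqrt_nonneg _, Real.sq_sqrt (by linarith)⟩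
  have four_le : 4 ≤ p := (abs_le_of_sq_le_sq' (by linarith) p_nonneg).2
  have two_mul_le : 2 * p ≤ q + 4 := (abs_le_of_sq_le_sq' (by nlinarith) (by linarith)).2
  obtain ⟨z₁, z₂, two_le₁, two_le₂, sum_eq, prod_eq⟩ :=
    exists_quadratic_roots_le_re (β := 2) (p := p) (q := q) (by linarith) (by linarith)
  exact ⟨p, q, z₁, z₂, two_le₁, two_le₂, sum_eq, prod_eq, by linarith, q_sq⟩

lemma sectorConst_add_two_mul_le (hn : n ≠ 0) : sectorConst (n + 2 * k) ≤ sectorConst n := by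
  rcases Nat.eq_zero_or_pos k with rfl | hk
  · simp
  have two_le : (2 : ℝ) ≤ n + k := mod_cast Nat.add_le_add (Nat.pos_of_ne_zero hn) hk
  unfold sectorConst
  nlinarith [mul_nonneg k.cast_nonneg (sub_nonneg.2 two_le)]

lemma thirty_six_add_twelve_mul_sectorConst : 36 + 12 * sectorConst N = 3 * (N + 2) * (6 - N) := by
  unfold sectorConst
  ring

lemma neg_sq_sub_eight_mul_sectorConst :
    -sectorConst N ^ 2 - 8 * sectorConst N = -(N * (N + 4) * (N - 4) * (N - 8)) / 16 := by
  unfold sectorConst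
  ring

lemma neg_five_quarters_le_sectorConst (hn : n ≤ 5) : -5 / 4 ≤ sectorConst n := by
  have n_le : (n : ℝ) ≤ 5 := mod_cast hn
  unfold sectorConst
  nlinarith [n.cast_nonneg (α := ℝ)]

lemma sectorBound_of_le_five (hn : n ≠ 0) (hn₅ : n ≤ 5) (hc : 3 * ((n : ℝ) + 2) * (6 - n) ≤ c) :
    SectorBound (sectorConst (n + 2 * k)) c := by
  have sector_le : sectorConst (n + 2 * k) ≤ sectorConst n := sectorConst_add_two_mul_le hn
  have le_sector := neg_five_quarters_le_sectorConst hn₅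
  rw [← thirty_six_add_twelve_mul_sectorConst] at hc
  exact ⟨by nlinarith [sq_nonneg (sectorConst (n + 2 * k) + 4)], .inr (by linarith)⟩

lemma le_sectorConst_mul_add_eight (hn : 6 ≤ n) (k : ℕ) :
    sectorConst n * (sectorConst n + 8) ≤
      sectorConst (n + 2 * k) * (sectorConst (n + 2 * k) + 8) := by
  rcases k.eq_zero_or_pos with rfl | k_pos
  · simp
  have sector_le : sectorConst (n + 2 * k) ≤ -8 := by
    have eight_le : (8 : ℝ) ≤ n + 2 * k := mod_cast by omega
    unfold sectorConst
    nlinarith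
  rcases hn.eq_or_lt with rfl | seven_le
  · have sector_six : sectorConst (6 : ℕ) = -3 := by norm_num [sectorConst]
    rw [sector_six]
    nlinarith
  · have sector_le_neg_four : sectorConst n ≤ -4 := by
      have seven_le' : (7 : ℝ) ≤ n := mod_cast seven_le
      unfold sectorConst
      nlinarith
    have := sectorConst_add_two_mul_le (k := k) (show n ≠ 0 by omega)
    nlinarith

lemma sectorBound_of_six_le (hn : 6 ≤ n)
    (hc : -((n : ℝ) * (n + 4) * (n - 4) * (n - 8)) / 16 ≤ c) :
    SectorBound (sectorConst (n + 2 * k)) c := by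
  rw [← neg_sq_sub_eight_mul_sectorConst] at hc
  have lower_bound := le_sectorConst_mul_add_eight hn k
  have sector_le : sectorConst (n + 2 * k) ≤ -3 := by
    have six_le : (6 : ℝ) ≤ n + 2 * k := mod_cast by omega
    unfold sectorConst
    nlinarith
  refine ⟨by linarith, or_iff_not_imp_left.2 fun not_small => ?_⟩
  nlinarith

lemma exists_sq_eq_abs_re_lt {w : ℂ} (hβ : 0 < β) (hw : ‖w‖ + w.re < 2 * β ^ 2) :
    ∃ z : ℂ, z ^ 2 = w ∧ |z.re| < β := by
  obtain ⟨z, rfl⟩ := IsAlgClosed.exists_pow_nat_eq w two_pos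
  refine ⟨z, rfl, abs_lt_of_sq_lt_sq ?_ hβ.le⟩
  have norm_sq_eq : ‖z ^ 2‖ = z.re ^ 2 + z.im ^ 2 := by
    rw [norm_pow, Complex.sq_norm, Complex.normSq_apply, sq, sq]
  have re_sq_eq : (z ^ 2).re = z.re ^ 2 - z.im ^ 2 := by
    rw [sq, Complex.mul_re, sq, sq]
  linarith

lemma exists_real_root_lt_four (hd : 0 ≤ 4 - 4 * A - c) (h : ¬SectorBound A c) :
    ∃ w : ℝ, (w + A) ^ 2 - 4 * w + c = 0 ∧ w < 4 := by
  have sq_sqrt := Real.sq_sqrt hd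
  have sqrt_nonneg := Real.sqrt_nonneg (4 - 4 * A - c)
  refine ⟨2 - A - √(4 - 4 * A - c), by linear_combination sq_sqrt, ?_⟩
  contrapose! h
  have lower_bound : -A ^ 2 - 8 * A ≤ c := by nlinarith
  exact ⟨lower_bound, or_iff_not_imp_left.2 fun _ => by nlinarith⟩

lemma exists_nonreal_root_norm_add_re_lt (hd : 4 - 4 * A - c < 0) (h : ¬SectorBound A c) :
    ∃ w : ℂ, (w + A) ^ 2 - 4 * w + c = 0 ∧ ‖w‖ + w.re < 8 := by
  obtain ⟨neg_six_lt, lt⟩ : -6 < A ∧ c < 36 + 12 * A := by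
    contrapose! h
    exact ⟨by nlinarith [sq_nonneg (A + 2)], or_iff_not_imp_left.2 fun hA => h (not_le.1 hA)⟩
  obtain ⟨r, r_sq⟩ : ∃ r : ℝ, r ^ 2 = -(4 - 4 * A - c) := ⟨_, Real.sq_sqrt (neg_pos.2 hd).le⟩
  let w : ℂ := (2 - A : ℝ) + r * Complex.I
  have norm_sq_eq : ‖w‖ ^ 2 = A ^ 2 + c := by
    rw [Complex.sq_norm, Complex.normSq_add_mul_I, r_sq]
    ring
  have norm_lt : ‖w‖ < A + 6 :=
    lt_of_pow_lt_pow_left₀ 2 (by linarith only [neg_six_lt]) (by linarith)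
  have re_eq : w.re = 2 - A := by simp [w]
  refine ⟨w, ?_, by linarith⟩
  have r_sq' : (r : ℂ) ^ 2 = -(4 - 4 * A - c) := mod_cast r_sq
  simp only [w, Complex.ofReal_sub, Complex.ofReal_ofNat]
  linear_combination (r : ℂ) ^ 2 * Complex.I_sq - r_sq'

lemma SectorBound.of_forall_root
    (h : ∀ z : ℂ, (z ^ 2 + A) ^ 2 - 4 * z ^ 2 + c = 0 → 2 ≤ |z.re|) : SectorBound A c := by
  contrapose! h
  obtain ⟨w, root, norm_add_re_lt⟩ :
      ∃ w : ℂ, (w + A) ^ 2 - 4 * w + c = 0 ∧ ‖w‖ + w.re < 8 := by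
    rcases le_or_gt 0 (4 - 4 * A - c) with hd | hd
    · obtain ⟨w, root, lt_four⟩ := exists_real_root_lt_four hd h
      refine ⟨w, mod_cast root, ?_⟩
      rw [Complex.norm_real, Real.norm_eq_abs, Complex.ofReal_re]
      rcases abs_cases w with hw | hw <;> linarith
    · exact exists_nonreal_root_norm_add_re_lt hd h
  obtain ⟨z, rfl, abs_re_lt⟩ := exists_sq_eq_abs_re_lt two_pos (by linarith : _ < 2 * (2 : ℝ) ^ 2)
  exact ⟨z, root, abs_re_lt⟩

end Threshold

section Moments

variable {n k : ℕ} {a : 𝔼 n} {c : ℝ} {ζ : ℂ} {w : 𝔼 n → ℂ} {K ψ χ : ℝ → ℂ}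

/-- The pairings of `w` with all functions `⟨a, x⟩ ^ k ψ(log ‖x‖)`, for `ψ` smooth and compactly
supported, vanish. -/
def MomentVanishes (k : ℕ) (a : 𝔼 n) (w : 𝔼 n → ℂ) : Prop :=
  ∀ ψ : ℝ → ℂ, ContDiff ℝ ∞ ψ → HasCompactSupport ψ → ∫ x, w x * rad k a ψ x = 0

lemma IsTest.integrable_mul {φ : 𝔼 n → ℂ} (hφ : IsTest φ) (hw : MemLp w 2) :
    Integrable fun x => w x * φ x :=
  hw.integrable_mul (hφ.memLp (p := 2))

lemma integral_mul_lower_terms_eq_zero (hw : MemLp w 2) (lower : ∀ i < k, MomentVanishes i a w)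
    (hψ : ContDiff ℝ ∞ ψ) (hψc : HasCompactSupport ψ) (hχ : ContDiff ℝ ∞ χ)
    (hχc : HasCompactSupport χ) (D : ℂ) :
    ∫ x, w x * ((k * (k - 1) * ‖a‖ ^ 2 : ℂ) * (rad (k - 2) a χ x + D * rad (k - 4) a ψ x)) = 0 := by
  rcases lt_or_ge k 2 with hk | hk
  · interval_cases k <;> simp
  have integrable_χ := (isTest_rad (k := k - 2) (a := a) hχ hχc).integrable_mul hw
  have integrable_ψ := ((isTest_rad (k := k - 4) (a := a) hψ hψc).integrable_mul hw).const_mul D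
  simp only [mul_left_comm (w _) (_ * _ * _), integral_const_mul]
  simp only [mul_add, mul_left_comm (w _) D]
  rw [integral_add integrable_χ integrable_ψ, integral_const_mul, lower (k - 2) (by omega) χ hχ hχc,
    lower (k - 4) (by omega) ψ hψ hψc, mul_zero, add_zero, mul_zero]

lemma IsDistributionalSolution.integral_mul_rad (h : IsDistributionalSolution c ζ w) (hn : n ≠ 0)
    (hw : MemLp w 2) (lower : ∀ i < k, MomentVanishes i a w) (hψ : ContDiff ℝ ∞ ψ)
    (hc : HasCompactSupport ψ) :
    ∫ x, w x * rad k a (radialOp (n + 2 * k) (radialOp (n + 2 * k) ψ) +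
      fun s => c * Real.exp (-4 * s) * ψ s) x = ζ * ∫ x, w x * rad k a ψ x := by
  set M := radialOp (n + 2 * k) (radialOp (n + 2 * k) ψ) + fun s => c * Real.exp (-4 * s) * ψ s
  set χ := radialOp (n + 2 * k) ψ + radialOp (n + 2 * (k - 2 : ℕ)) ψ
  set D : ℂ := (k - 2 : ℕ) * ((k - 2 : ℕ) - 1) * ‖a‖ ^ 2
  have contDiff_M : ContDiff ℝ ∞ M := (contDiff_radialOp (contDiff_radialOp hψ _) _).add
    ((contDiff_const.mul (contDiff_exp_mul _)).mul hψ)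
  have compact_M : HasCompactSupport M :=
    (hasCompactSupport_radialOp (hasCompactSupport_radialOp hc _) _).add hc.mul_left
  have test_ψ := isTest_rad (k := k) (a := a) hψ hc
  have integrable_M := (isTest_rad (k := k) (a := a) contDiff_M compact_M).integrable_mul hw
  have integrable_T2form := (test_ψ.T2form c).integrable_mul hw
  have lower_terms := integral_mul_lower_terms_eq_zero (χ := χ) hw lower hψ hc
    ((contDiff_radialOp hψ (n + 2 * k)).add (contDiff_radialOp hψ (n + 2 * (k - 2 : ℕ))))
    ((hasCompactSupport_radialOp hc _).add (hasCompactSupport_radialOp hc _)) D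
  have pairing := h _ test_ψ
  simp only [mul_sub, mul_left_comm (w _) ζ] at pairing
  rw [integral_sub integrable_T2form ((test_ψ.integrable_mul hw).const_mul ζ), integral_const_mul,
    sub_eq_zero] at pairing
  rw [← pairing, ← sub_eq_zero, ← integral_sub integrable_M integrable_T2form, ← neg_eq_zero,
    ← integral_neg, ← lower_terms]
  refine integral_congr_ae ?_
  filter_upwards [ae_ne_zero hn] with x hx
  have T2form_eq : T2form c (rad k a ψ) x = rad k a M x +
      (k * (k - 1) * ‖a‖ ^ 2 : ℂ) * (rad (k - 2) a χ x + D * rad (k - 4) a ψ x) :=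
    T2form_rad c hψ hx
  rw [T2form_eq]
  ring

lemma integrable_mul_exp_mul (hK₂ : MemLp K 2) (b : ℝ) (hψ : Continuous ψ)
    (hc : HasCompactSupport ψ) : Integrable fun s => K s * (Real.exp (b * s) * ψ s) :=
  hK₂.integrable_mul (q := 2) ((by fun_prop : Continuous fun s =>
    (Real.exp (b * s) : ℂ) * ψ s).memLp_of_hasCompactSupport hc.mul_left)

lemma IsDistributionalSolution.isWeakSolution (h : IsDistributionalSolution c ζ w) (hn : n ≠ 0)
    (hw : MemLp w 2) (lower : ∀ i < k, MomentVanishes i a w) (hK : IsRadialProfile k a w K)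
    (hK₂ : MemLp K 2) :
    IsWeakSolution 2 (2 * sectorConst (n + 2 * k) - 4) (sectorConst (n + 2 * k) ^ 2 + c) ζ K := by
  intro g hg hc
  set N : ℝ := n + 2 * k with hN
  set ψ : ℝ → ℂ := fun s => Real.exp ((4 - N) / 2 * s) * g s
  have contDiff_ψ : ContDiff ℝ ∞ ψ := (contDiff_exp_mul _).mul hg
  have compact_ψ : HasCompactSupport ψ := hc.mul_left
  set M : ℝ → ℂ := fun s => Real.exp (((4 - N) / 2 - 4) * s) *
    quarticOp (2 * sectorConst N - 4) (sectorConst N ^ 2 + c) g s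
  have continuous_M : Continuous M :=
    ((contDiff_exp_mul _).mul (contDiff_quarticOp hg)).continuous
  have compact_M : HasCompactSupport M := (hasCompactSupport_quarticOp hc).mul_left
  have exp_neg_two (s : ℝ) : Real.exp (-2 * s) =
      Real.exp ((n / 2 + k) * s) * Real.exp (((4 - N) / 2 - 4) * s) := by
    rw [← Real.exp_add, hN]
    ring_nf
  have exp_two (s : ℝ) : Real.exp (2 * s) =
      Real.exp ((n / 2 + k) * s) * Real.exp ((4 - N) / 2 * s) := by
    rw [← Real.exp_add, hN]
    ring_nf
  have moments := h.integral_mul_rad hn hw lower contDiff_ψ compact_ψ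
  rw [← hN, radialOp_radialOp_exp_mul_add hg N c, hK M continuous_M compact_M,
    hK ψ contDiff_ψ.continuous compact_ψ, ← integral_const_mul, ← sub_eq_zero,
    ← integral_sub (integrable_mul_exp_mul hK₂ _ continuous_M compact_M)
      ((integrable_mul_exp_mul hK₂ _ contDiff_ψ.continuous compact_ψ).const_mul ζ)] at moments
  rw [← moments]
  refine integral_congr_ae (.of_forall fun s => ?_)
  simp only [M, ψ, exp_neg_two, exp_two]
  push_cast
  ring

lemma momentVanishes_of_isDistributionalSolution (hn : n ≠ 0)
    (hc : ∀ k : ℕ, SectorBound (sectorConst (n + 2 * k)) c) (hζ : ζ.re = 0) (hζ₀ : ζ ≠ 0)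
    (hw : MemLp w 2) (h : IsDistributionalSolution c ζ w) (k : ℕ) (a : 𝔼 n) :
    MomentVanishes k a w := by
  induction k using Nat.strong_induction_on with
  | _ k lower =>
    obtain ⟨K, hK₂, hK⟩ := exists_isRadialProfile hn k a hw
    obtain ⟨p, q, z₁, z₂, two_le₁, two_le₂, sum_eq, prod_eq, second_coeff, zeroth_coeff⟩ :=
      (hc k).exists_factorization
    have weak := h.isWeakSolution hn hw lower hK hK₂
    rw [← second_coeff, ← zeroth_coeff] at weak
    have K_ae_zero := weak.ae_eq_zero two_pos two_le₁ two_le₂ sum_eq prod_eq hζ hζ₀ hK₂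
    intro ψ hψ hψc
    rw [hK ψ hψ.continuous hψc]
    refine integral_eq_zero_of_ae ?_
    filter_upwards [K_ae_zero] with s hs
    rw [hs, Pi.zero_apply, zero_mul]

end Moments

section Fourier

variable {V : Type*} [NormedAddCommGroup V] [InnerProductSpace ℝ V] [FiniteDimensional ℝ V]
  [MeasurableSpace V] [BorelSpace V] {F : V → ℂ}

lemma integral_schwartz_mul_eq_zero_of_fourier_eq_zero (hF : Integrable F)
    (h : FourierTransform.fourier F = 0) (φ : SchwartzMap V ℂ) : ∫ x, φ x * F x = 0 := by
  let φinv : SchwartzMap V ℂ := FourierTransformInv.fourierInv φ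
  have self_adjoint := VectorFourier.integral_fourierIntegral_smul_eq_flip (L := innerₗ V)
    Real.continuous_fourierChar continuous_inner hF φinv.integrable (μ := volume) (ν := volume)
  have fourier_φinv : VectorFourier.fourierIntegral Real.fourierChar volume (innerₗ V) φinv = φ :=
    (SchwartzMap.fourier_coe φinv).symm.trans
      (congrArg DFunLike.coe (FourierTransform.fourier_fourierInv_eq φ))
  have fourier_F : VectorFourier.fourierIntegral Real.fourierChar volume (innerₗ V) F = 0 := h
  rw [flip_innerₗ, fourier_F, fourier_φinv] at self_adjoint
  simpa only [Pi.zero_apply, zero_mul, integral_zero, smul_eq_mul, mul_comm (F _)]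
    using self_adjoint.symm

lemma ae_eq_zero_of_fourier_eq_zero (hF : Integrable F) (h : FourierTransform.fourier F = 0) :
    F =ᵐ[volume] 0 := by
  refine ae_eq_zero_of_integral_contDiff_smul_eq_zero hF.locallyIntegrable fun g hg hc => ?_
  have contDiff_g : ContDiff ℝ ∞ fun x => (g x : ℂ) := Complex.ofRealCLM.contDiff.comp hg
  have compact_g : HasCompactSupport fun x => (g x : ℂ) :=
    hc.comp_left (g := ((↑) : ℝ → ℂ)) Complex.ofReal_zero
  simpa only [HasCompactSupport.toSchwartzMap_toFun, Complex.real_smul] using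
    integral_schwartz_mul_eq_zero_of_fourier_eq_zero hF h (compact_g.toSchwartzMap contDiff_g)

end Fourier

section Completeness

variable {n : ℕ} {c R : ℝ} {w : 𝔼 n → ℂ} {ψ : ℝ → ℂ}

lemma norm_mul_rad_le (hR : tsupport ψ ⊆ Metric.closedBall 0 R) (k : ℕ) (ξ x : 𝔼 n) :
    ‖w x * rad k ξ ψ x‖ ≤ (‖ξ‖ * Real.exp R) ^ k * ‖w x * rad 0 ξ ψ x‖ := by
  rcases eq_or_ne x 0 with rfl | hx
  · simp [rad]
  rw [rad_of_ne hx, rad_of_ne hx]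
  by_cases ψ_eq_zero : ψ (Real.log ‖x‖) = 0
  · simp [ψ_eq_zero]
  have log_le := hR (subset_tsupport ψ ψ_eq_zero)
  rw [mem_closedBall_zero_iff, Real.norm_eq_abs, abs_le] at log_le
  have norm_le : ‖x‖ ≤ Real.exp R := (Real.log_le_iff_le_exp (norm_pos_iff.2 hx)).1 log_le.2
  have inner_le : |inner ℝ ξ x| ≤ ‖ξ‖ * Real.exp R :=
    (abs_real_inner_le_norm ξ x).trans (by gcongr)
  rw [norm_mul, norm_mul, norm_pow, Complex.norm_real, Real.norm_eq_abs, pow_zero, one_mul,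
    norm_mul, mul_left_comm]
  gcongr

lemma summable_integral_norm_mul_rad (hw : MemLp w 2) (hψ : ContDiff ℝ ∞ ψ)
    (hc : HasCompactSupport ψ) (z : ℂ) (ξ : 𝔼 n) :
    Summable fun k : ℕ => ∫ x, ‖z ^ k / (k.factorial : ℂ) * (w x * rad k ξ ψ x)‖ := by
  obtain ⟨R, hR⟩ := hc.isCompact.isBounded.subset_closedBall 0
  have integrable_mul_rad (k : ℕ) : Integrable fun x => w x * rad k ξ ψ x :=
    (isTest_rad hψ hc).integrable_mul hw
  refine .of_nonneg_of_le (fun k => integral_nonneg fun x => norm_nonneg _) (fun k => ?_)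
    ((Real.summable_pow_div_factorial (‖z‖ * (‖ξ‖ * Real.exp R))).mul_right
      (∫ x, ‖w x * rad 0 ξ ψ x‖))
  rw [← integral_const_mul]
  refine integral_mono ((integrable_mul_rad k).const_mul _).norm
    ((integrable_mul_rad 0).norm.const_mul _) fun x => ?_
  dsimp only
  rw [norm_mul, norm_div, norm_pow, Complex.norm_natCast, mul_pow, mul_div_right_comm, mul_assoc]
  gcongr
  exact norm_mul_rad_le hR k ξ x

lemma tsum_mul_rad (z y : ℂ) (ξ x : 𝔼 n) (ψ : ℝ → ℂ) :
    ∑' k : ℕ, z ^ k / (k.factorial : ℂ) * (y * rad k ξ ψ x) =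
      Complex.exp (z * (inner ℝ ξ x : ℝ)) * (y * rad 0 0 ψ x) := by
  have exp_series := NormedSpace.expSeries_div_hasSum_exp (z * (inner ℝ ξ x : ℝ))
  rw [← Complex.exp_eq_exp_ℂ] at exp_series
  rw [← (exp_series.mul_right (y * rad 0 0 ψ x)).tsum_eq]
  refine tsum_congr fun k => ?_
  rcases eq_or_ne x 0 with rfl | hx
  · simp [rad]
  · rw [rad_of_ne hx, rad_of_ne hx]
    ring

-- The moments are the Taylor coefficients of the Fourier transform.
lemma fourier_mul_rad_eq_zero (hw : MemLp w 2) (h : ∀ k a, MomentVanishes k a w)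
    (hψ : ContDiff ℝ ∞ ψ) (hc : HasCompactSupport ψ) :
    FourierTransform.fourier (fun x => w x * rad 0 0 ψ x) = 0 := by
  ext ξ
  set z : ℂ := -2 * Real.pi * Complex.I with hz
  have exchange := hasSum_integral_of_summable_integral_norm
    (fun k => ((isTest_rad (k := k) hψ hc).integrable_mul hw).const_mul (z ^ k / (k.factorial : ℂ)))
    (summable_integral_norm_mul_rad hw hψ hc z ξ)
  simp only [integral_const_mul, h _ _ ψ hψ hc, mul_zero, tsum_mul_rad] at exchange
  rw [Real.fourier_eq', Pi.zero_apply, ← exchange.unique hasSum_zero]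
  refine integral_congr_ae (.of_forall fun x => ?_)
  simp only [smul_eq_mul, real_inner_comm ξ x, hz]
  push_cast
  ring_nf

lemma ae_eq_zero_of_momentVanishes (hn : n ≠ 0) (hw : MemLp w 2)
    (h : ∀ k a, MomentVanishes k a w) : w =ᵐ[volume] 0 := by
  let bump (m : ℕ) : ContDiffBump (0 : ℝ) :=
    ⟨m + 1, m + 2, by positivity, by linarith⟩
  have cutoff_ae_zero (m : ℕ) :
      (fun x => w x * rad 0 0 (fun s => (bump m s : ℂ)) x) =ᵐ[volume] 0 := by
    have contDiff_bump : ContDiff ℝ ∞ fun s => (bump m s : ℂ) :=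
      Complex.ofRealCLM.contDiff.comp (bump m).contDiff
    have compact_bump : HasCompactSupport fun s => (bump m s : ℂ) :=
      (bump m).hasCompactSupport.comp_left (g := ((↑) : ℝ → ℂ)) Complex.ofReal_zero
    exact ae_eq_zero_of_fourier_eq_zero ((isTest_rad contDiff_bump compact_bump).integrable_mul hw)
      (fourier_mul_rad_eq_zero hw h contDiff_bump compact_bump)
  filter_upwards [ae_all_iff.2 cutoff_ae_zero, ae_ne_zero hn] with x hx hx₀
  obtain ⟨m, hm⟩ := exists_nat_ge |Real.log ‖x‖|
  have bump_eq_one : bump m (Real.log ‖x‖) = 1 := by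
    refine (bump m).one_of_mem_closedBall ?_
    rw [mem_closedBall_zero_iff, Real.norm_eq_abs]
    exact hm.trans (by simp [bump])
  simpa [rad_of_ne hx₀, bump_eq_one] using hx m

theorem essentiallySelfAdjoint_T2op_of_sectorBound (hn : n ≠ 0)
    (hc : ∀ k : ℕ, SectorBound (sectorConst (n + 2 * k)) c) :
    EssentiallySelfAdjoint (T2op n c) := by
  refine essentiallySelfAdjoint_T2op_of_forall_distributionalSolution hn fun ζ hζ w hw h => ?_
  have ζ_ne_zero : ζ ≠ 0 := by
    rintro rfl
    norm_num at hζ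
  have ζ_re : ζ.re = 0 := by
    rcases sq_eq_sq_iff_eq_or_eq_neg.1 (hζ.trans Complex.I_sq.symm) with rfl | rfl <;> simp
  exact ae_eq_zero_of_momentVanishes hn hw
    (momentVanishes_of_isDistributionalSolution hn hc ζ_re ζ_ne_zero hw h)

end Completeness

section BoundaryForm

variable {b d : ℝ} {f g f' g' : ℝ → ℂ} {s : ℝ}

/-- The boundary form of the formally symmetric operator `D⁴ + b D² + d` with respect to the
bilinear pairing `∫ f g`. -/
def quarticForm (b : ℝ) (f g : ℝ → ℂ) (s : ℝ) : ℂ :=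
  iteratedDeriv 3 f s * g s - iteratedDeriv 2 f s * iteratedDeriv 1 g s +
    iteratedDeriv 1 f s * iteratedDeriv 2 g s - f s * iteratedDeriv 3 g s +
    b * (iteratedDeriv 1 f s * g s - f s * iteratedDeriv 1 g s)

lemma quarticOp_congr (h : f =ᶠ[𝓝 s] g) (b d : ℝ) : quarticOp b d f s = quarticOp b d g s := by
  simp only [quarticOp, Pi.add_apply, Pi.smul_apply, h.iteratedDeriv_eq, h.eq_of_nhds]

lemma quarticForm_congr (hf : f =ᶠ[𝓝 s] f') (hg : g =ᶠ[𝓝 s] g') (b : ℝ) :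
    quarticForm b f g s = quarticForm b f' g' s := by
  simp only [quarticForm, hf.iteratedDeriv_eq, hg.iteratedDeriv_eq, hf.eq_of_nhds, hg.eq_of_nhds]

lemma quarticOp_zero : quarticOp b d (0 : ℝ → ℂ) s = 0 := by
  simp [quarticOp, iteratedDeriv_const_zero]

lemma quarticForm_zero_left : quarticForm b 0 g s = 0 := by
  simp [quarticForm, iteratedDeriv_const_zero]

lemma hasDerivAt_quarticForm (hf : ContDiff ℝ ∞ f) (hg : ContDiff ℝ ∞ g) (b d s : ℝ) :
    HasDerivAt (quarticForm b f g) (quarticOp b d f s * g s - f s * quarticOp b d g s) s := by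
  have deriv_f := fun k => isJet_iteratedDeriv hf k s
  have deriv_g := fun k => isJet_iteratedDeriv hg k s
  have f_zero : HasDerivAt f (iteratedDeriv 1 f s) s := by simpa using deriv_f 0
  have g_zero : HasDerivAt g (iteratedDeriv 1 g s) s := by simpa using deriv_g 0
  refine (((((deriv_f 3).mul g_zero).sub ((deriv_f 2).mul (deriv_g 1))).add
    ((deriv_f 1).mul (deriv_g 2))).sub (f_zero.mul (deriv_g 3))).add
    ((((deriv_f 1).mul g_zero).sub (f_zero.mul (deriv_g 1))).const_mul (b : ℂ)) |>.congr_deriv ?_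
  simp only [quarticOp, Pi.add_apply, Pi.smul_apply, Complex.real_smul]
  ring

end BoundaryForm

section LeftCutoff

variable {b d : ℝ} {f g : ℝ → ℂ} {s : ℝ}

/-- The product of `f` with a smooth cutoff which is `1` on `(-∞, -1]` and `0` on `[0, ∞)`. -/
def leftCutoff (f : ℝ → ℂ) (s : ℝ) : ℂ := (Real.smoothTransition (-s) : ℂ) * f s

lemma contDiff_leftCutoff (hf : ContDiff ℝ ∞ f) : ContDiff ℝ ∞ (leftCutoff f) :=
  (Complex.ofRealCLM.contDiff.comp (Real.smoothTransition.contDiff.comp contDiff_neg)).mul hf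

lemma leftCutoff_of_nonneg (hs : 0 ≤ s) : leftCutoff f s = 0 := by
  rw [leftCutoff, Real.smoothTransition.zero_of_nonpos (neg_nonpos.2 hs), Complex.ofReal_zero,
    zero_mul]

lemma leftCutoff_eventuallyEq_zero (hs : 0 < s) : leftCutoff f =ᶠ[𝓝 s] 0 := by
  filter_upwards [Ioi_mem_nhds hs] with t ht using leftCutoff_of_nonneg (le_of_lt ht)

lemma leftCutoff_eventuallyEq (hs : s < -1) : leftCutoff f =ᶠ[𝓝 s] f := by
  filter_upwards [Iio_mem_nhds hs] with t ht
  rw [leftCutoff, Real.smoothTransition.one_of_one_le (le_neg_of_le_neg (le_of_lt ht)),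
    Complex.ofReal_one, one_mul]

lemma norm_leftCutoff_le : ‖leftCutoff f s‖ ≤ ‖f s‖ := by
  rw [leftCutoff, norm_mul, Complex.norm_real, Real.norm_eq_abs,
    abs_of_nonneg (Real.smoothTransition.nonneg _)]
  exact mul_le_of_le_one_left (norm_nonneg _) (Real.smoothTransition.le_one _)

lemma support_quarticOp_leftCutoff_subset (hf : quarticOp b d f = 0) :
    Function.support (quarticOp b d (leftCutoff f)) ⊆ Set.Icc (-1) 0 := by
  refine Function.support_subset_iff'.2 fun s hs => ?_
  rw [Set.mem_Icc, not_and_or, not_le, not_le] at hs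
  rcases hs with hs | hs
  · rw [quarticOp_congr (leftCutoff_eventuallyEq hs), hf, Pi.zero_apply]
  · rw [quarticOp_congr (leftCutoff_eventuallyEq_zero hs), quarticOp_zero]

lemma hasCompactSupport_quarticOp_leftCutoff (hf : quarticOp b d f = 0) :
    HasCompactSupport (quarticOp b d (leftCutoff f)) :=
  .of_support_subset_isCompact isCompact_Icc (support_quarticOp_leftCutoff_subset hf)

lemma integral_quarticOp_leftCutoff_mul_sub (hf : ContDiff ℝ ∞ f) (hg : ContDiff ℝ ∞ g)
    (hPf : quarticOp b d f = 0) (hPg : quarticOp b d g = 0) (hs : s < -1) :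
    ∫ t, (quarticOp b d (leftCutoff f) t * leftCutoff g t -
      leftCutoff f t * quarticOp b d (leftCutoff g) t) = -quarticForm b f g s := by
  have smooth_f := contDiff_leftCutoff hf
  have smooth_g := contDiff_leftCutoff hg
  have support_subset : Function.support (fun t => quarticOp b d (leftCutoff f) t * leftCutoff g t -
      leftCutoff f t * quarticOp b d (leftCutoff g) t) ⊆ Set.Ioc s 1 :=
    (Function.support_sub _ _).trans <| (Set.union_subset
      ((Function.support_mul_subset_left _ _).trans (support_quarticOp_leftCutoff_subset hPf))
      ((Function.support_mul_subset_right _ _).trans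
        (support_quarticOp_leftCutoff_subset hPg))).trans <|
      (Set.Icc_subset_Ioc_iff (by norm_num)).2 ⟨hs, zero_le_one⟩
  rw [← intervalIntegral.integral_eq_integral_of_support_subset support_subset,
    intervalIntegral.integral_eq_sub_of_hasDerivAt
      (fun t _ => hasDerivAt_quarticForm smooth_f smooth_g b d t)
      ((((contDiff_quarticOp smooth_f).continuous.mul smooth_g.continuous).sub
        (smooth_f.continuous.mul (contDiff_quarticOp smooth_g).continuous)).intervalIntegrable _ _),
    quarticForm_congr (leftCutoff_eventuallyEq_zero one_pos) .rfl, quarticForm_zero_left, zero_sub,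
    quarticForm_congr (leftCutoff_eventuallyEq hs) (leftCutoff_eventuallyEq hs)]

end LeftCutoff

section LogRadial

variable {n : ℕ} {c : ℝ} {f g : ℝ → ℂ}

/-- The radial function `r ^ ((4 - n) / 2) * g (log r)` on `ℝⁿ`. Up to the constant `sphereArea n`
this substitution is isometric from `L²(ℝ; e⁴ˢ ds)` to `L²(ℝⁿ)`. -/
def logRadial (n : ℕ) (g : ℝ → ℂ) : 𝔼 n → ℂ :=
  rad 0 0 fun s => Real.exp ((4 - n) / 2 * s) * g s

lemma smoothOff_logRadial (hg : ContDiff ℝ ∞ g) : SmoothOff (logRadial n g) :=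
  smoothOff_rad ((contDiff_exp_mul _).mul hg)

lemma SmoothOff.aestronglyMeasurable (hn : n ≠ 0) {u : 𝔼 n → ℂ} (hu : SmoothOff u) :
    AEStronglyMeasurable u := by
  rw [← Measure.restrict_eq_self_of_ae_mem (s := {0}ᶜ) (ae_ne_zero hn)]
  exact hu.continuousOn.aestronglyMeasurable (measurableSet_singleton _).compl

lemma memLp_logRadial (hn : n ≠ 0) (hg : ContDiff ℝ ∞ g)
    (hi : Integrable fun s => Real.exp (4 * s) * ‖g s‖ ^ 2) : MemLp (logRadial n g) 2 := by
  rw [memLp_two_iff_integrable_sq_norm ((smoothOff_logRadial hg).aestronglyMeasurable hn)]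
  have integrable_radial : Integrable fun x : 𝔼 n =>
      Real.exp ((4 - n) * Real.log ‖x‖) * ‖g (Real.log ‖x‖)‖ ^ 2 := by
    refine integrable_comp_log_norm hn (f := fun s => Real.exp ((4 - n) * s) * ‖g s‖ ^ 2)
      (hi.congr (ae_of_all _ fun s => ?_))
    beta_reduce
    rw [smul_eq_mul, ← mul_assoc, ← Real.exp_add, show n * s + (4 - n) * s = 4 * s by ring]
  refine integrable_radial.congr ?_
  filter_upwards [ae_ne_zero hn] with x hx
  rw [logRadial, rad_of_ne hx, pow_zero, one_mul, norm_mul, Complex.norm_real, mul_pow,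
    Real.norm_eq_abs, Real.abs_exp, ← Real.exp_nat_mul]
  congr 2
  push_cast
  ring

lemma T2form_logRadial_ae (hn : n ≠ 0) (hg : ContDiff ℝ ∞ g) :
    T2form c (logRadial n g) =ᵐ[volume] rad 0 0 fun s => Real.exp (((4 - n) / 2 - 4) * s) *
      quarticOp (2 * sectorConst n - 4) (sectorConst n ^ 2 + c) g s := by
  filter_upwards [ae_ne_zero hn] with x hx using T2form_rad_zero_exp_mul c hg hx

lemma memLp_T2form_logRadial (hn : n ≠ 0) (hg : ContDiff ℝ ∞ g)
    (hc : HasCompactSupport (quarticOp (2 * sectorConst n - 4) (sectorConst n ^ 2 + c) g)) :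
    MemLp (T2form c (logRadial n g)) 2 :=
  (isTest_rad ((contDiff_exp_mul _).mul (contDiff_quarticOp hg)) hc.mul_left).memLp.ae_eq
    (T2form_logRadial_ae hn hg).symm

lemma integral_T2form_logRadial_mul (hn : n ≠ 0) (hf : ContDiff ℝ ∞ f) (hg : ContDiff ℝ ∞ g) :
    ∫ x, T2form c (logRadial n f) x * logRadial n g x =
      sphereArea n •
        ∫ s, quarticOp (2 * sectorConst n - 4) (sectorConst n ^ 2 + c) f s * g s := by
  let P := quarticOp (2 * sectorConst n - 4) (sectorConst n ^ 2 + c) f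
  have continuous_integrand : Continuous fun s : ℝ => (Real.exp (-n * s) : ℂ) * (P s * g s) :=
    (contDiff_exp_mul (-n)).continuous.mul ((contDiff_quarticOp hf).continuous.mul hg.continuous)
  have exp_smul (s : ℝ) : Real.exp (n * s) • ((Real.exp (-n * s) : ℂ) * (P s * g s)) =
      P s * g s := by
    rw [Complex.real_smul, ← mul_assoc, ← Complex.ofReal_mul, ← Real.exp_add, neg_mul,
      add_neg_cancel, Real.exp_zero, Complex.ofReal_one, one_mul]
  have polar := integral_comp_log_norm hn continuous_integrand
  simp only [exp_smul] at polar
  rw [← polar]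
  refine integral_congr_ae ?_
  filter_upwards [ae_ne_zero hn, T2form_logRadial_ae hn hf] with x hx hTx
  rw [hTx, logRadial, rad_of_ne hx, rad_of_ne hx, pow_zero, one_mul, one_mul, mul_mul_mul_comm,
    ← Complex.ofReal_mul, ← Real.exp_add, ← add_mul,
    show ((4 - n) / 2 - 4 + (4 - n) / 2 : ℝ) = -n by ring]

lemma integral_quarticOp_mul_eq_of_essentiallySelfAdjoint (hn : n ≠ 0)
    (h : EssentiallySelfAdjoint (T2op n c)) (hf : ContDiff ℝ ∞ f) (hg : ContDiff ℝ ∞ g)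
    (hf₂ : Integrable fun s => Real.exp (4 * s) * ‖f s‖ ^ 2)
    (hg₂ : Integrable fun s => Real.exp (4 * s) * ‖g s‖ ^ 2)
    (hfc : HasCompactSupport (quarticOp (2 * sectorConst n - 4) (sectorConst n ^ 2 + c) f))
    (hgc : HasCompactSupport (quarticOp (2 * sectorConst n - 4) (sectorConst n ^ 2 + c) g)) :
    ∫ s, quarticOp (2 * sectorConst n - 4) (sectorConst n ^ 2 + c) f s * g s =
      ∫ s, f s * quarticOp (2 * sectorConst n - 4) (sectorConst n ^ 2 + c) g s := by
  have symmetric := integral_T2form_mul_eq_of_essentiallySelfAdjoint h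
    (smoothOff_logRadial hf) (smoothOff_logRadial hg)
    (memLp_logRadial hn hf hf₂) (memLp_logRadial hn hg hg₂)
    (memLp_T2form_logRadial hn hf hfc) (memLp_T2form_logRadial hn hg hgc)
  simp only [mul_comm (logRadial n f _)] at symmetric
  rw [integral_T2form_logRadial_mul hn hf hg, integral_T2form_logRadial_mul hn hg hf] at symmetric
  simp only [mul_comm (f _)]
  exact smul_right_injective ℂ (sphereArea_pos hn).ne' symmetric

lemma quarticForm_eq_zero_of_essentiallySelfAdjoint (hn : n ≠ 0)
    (h : EssentiallySelfAdjoint (T2op n c)) (hf : ContDiff ℝ ∞ f) (hg : ContDiff ℝ ∞ g)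
    (hPf : quarticOp (2 * sectorConst n - 4) (sectorConst n ^ 2 + c) f = 0)
    (hPg : quarticOp (2 * sectorConst n - 4) (sectorConst n ^ 2 + c) g = 0)
    (hf₂ : Integrable fun s => Real.exp (4 * s) * ‖leftCutoff f s‖ ^ 2)
    (hg₂ : Integrable fun s => Real.exp (4 * s) * ‖leftCutoff g s‖ ^ 2) {s : ℝ} (hs : s < -1) :
    quarticForm (2 * sectorConst n - 4) f g s = 0 := by
  have smooth_f := contDiff_leftCutoff hf
  have smooth_g := contDiff_leftCutoff hg
  have compact_f := hasCompactSupport_quarticOp_leftCutoff hPf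
  have compact_g := hasCompactSupport_quarticOp_leftCutoff hPg
  have symmetric := integral_quarticOp_mul_eq_of_essentiallySelfAdjoint hn h smooth_f smooth_g
    hf₂ hg₂ compact_f compact_g
  rw [← neg_eq_zero, ← integral_quarticOp_leftCutoff_mul_sub hf hg hPf hPg hs, integral_sub,
    symmetric, sub_self]
  · exact ((contDiff_quarticOp smooth_f).continuous.mul
      smooth_g.continuous).integrable_of_hasCompactSupport compact_f.mul_right
  · exact (smooth_f.continuous.mul
      (contDiff_quarticOp smooth_g).continuous).integrable_of_hasCompactSupport compact_g.mul_left

end LogRadial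

section AffineExp

variable {b d s ε β : ℝ} {p q z : ℂ}

/-- The function `(p + q s) e^{zs}`; for `q ≠ 0` it is the second solution at a double
characteristic root. -/
def affineExp (p q z : ℂ) (s : ℝ) : ℂ := (p + q * s) * Complex.exp (z * s)

lemma contDiff_affineExp : ContDiff ℝ ∞ (affineExp p q z) := by
  have contDiff_ofReal : ContDiff ℝ ∞ ((↑) : ℝ → ℂ) := Complex.ofRealCLM.contDiff
  exact (contDiff_const.add (contDiff_const.mul contDiff_ofReal)).mul
    (contDiff_const.mul contDiff_ofReal).cexp

lemma deriv_affineExp : deriv (affineExp p q z) = affineExp (q + z * p) (z * q) z := by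
  ext s
  have ofReal_deriv : HasDerivAt ((↑) : ℝ → ℂ) 1 s := Complex.ofRealCLM.hasDerivAt
  have product_deriv :=
    ((ofReal_deriv.const_mul q).const_add p).mul (ofReal_deriv.const_mul z).cexp
  refine (HasDerivAt.deriv (f := affineExp p q z) product_deriv).trans ?_
  rw [affineExp]
  ring

lemma quarticOp_affineExp :
    quarticOp b d (affineExp p q z) s = (z ^ 4 + b * z ^ 2 + d) * affineExp p q z s +
      (4 * z ^ 3 + 2 * b * z) * q * Complex.exp (z * s) := by
  simp only [quarticOp, Pi.add_apply, Pi.smul_apply, Complex.real_smul, iteratedDeriv_succ',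
    iteratedDeriv_zero, deriv_affineExp, affineExp]
  ring

lemma quarticForm_affineExp :
    quarticForm b (affineExp 1 0 z) (affineExp p q (-z)) s =
      (4 * z ^ 3 + 2 * b * z) * (p + q * s) - (6 * z ^ 2 + b) * q := by
  have exp_mul_exp : Complex.exp (z * s) * Complex.exp (-z * s) = 1 := by
    rw [← Complex.exp_add, neg_mul, add_neg_cancel, Complex.exp_zero]
  simp only [quarticForm, iteratedDeriv_succ', iteratedDeriv_zero, deriv_affineExp, affineExp]
  linear_combination
    ((4 * z ^ 3 + 2 * b * z) * (p + q * s) - (6 * z ^ 2 + b) * q) * exp_mul_exp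

-- For `b ≠ 0` the even polynomial `z ^ 4 + b * z ^ 2 + d` has no root of multiplicity three.
lemma exists_quarticForm_affineExp_ne_zero (hb : b ≠ 0) (hz : z ^ 4 + b * z ^ 2 + d = 0) (s : ℝ) :
    ∃ p q : ℂ, quarticOp b d (affineExp p q (-z)) = 0 ∧
      quarticForm b (affineExp 1 0 z) (affineExp p q (-z)) s ≠ 0 := by
  by_cases double_root : 4 * z ^ 3 + 2 * b * z = 0
  · refine ⟨0, 1, funext fun t => ?_, fun form_eq_zero => hb ?_⟩
    · rw [quarticOp_affineExp, Pi.zero_apply]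
      linear_combination affineExp 0 1 (-z) t * hz - Complex.exp (-z * t) * double_root
    · rw [quarticForm_affineExp, double_root] at form_eq_zero
      have triple_root : 6 * z ^ 2 + b = 0 := by linear_combination -form_eq_zero
      have b_mul_z : (b : ℂ) * z = 0 := by
        linear_combination 3 / 4 * double_root - z / 2 * triple_root
      rcases mul_eq_zero.1 b_mul_z with hb₀ | rfl
      · exact_mod_cast hb₀
      · simpa using triple_root
  · refine ⟨1, 0, funext fun t => ?_, ?_⟩
    · rw [quarticOp_affineExp, Pi.zero_apply]
      linear_combination affineExp 1 0 (-z) t * hz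
    · rw [quarticForm_affineExp]
      simpa using double_root

lemma norm_affineExp_le (hε : 0 < ε) (hs : s ≤ 0) :
    ‖affineExp p q z s‖ ≤ (‖p‖ + ‖q‖ / ε) * Real.exp ((z.re - ε) * s) := by
  have one_le : 1 ≤ Real.exp (-(ε * s)) :=
    Real.one_le_exp (neg_nonneg.2 (mul_nonpos_of_nonneg_of_nonpos hε.le hs))
  have abs_le : |s| ≤ Real.exp (-(ε * s)) / ε := by
    rw [abs_of_nonpos hs, le_div_iff₀ hε]
    linarith [Real.add_one_le_exp (-(ε * s))]
  have affine_le : ‖p + q * s‖ ≤ (‖p‖ + ‖q‖ / ε) * Real.exp (-(ε * s)) := calc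
    ‖p + q * s‖ ≤ ‖p‖ + ‖q‖ * |s| := by
      simpa only [norm_mul, Complex.norm_real, Real.norm_eq_abs] using norm_add_le p (q * s)
    _ ≤ ‖p‖ * Real.exp (-(ε * s)) + ‖q‖ * (Real.exp (-(ε * s)) / ε) := by
      gcongr
      exact le_mul_of_one_le_right (norm_nonneg p) one_le
    _ = (‖p‖ + ‖q‖ / ε) * Real.exp (-(ε * s)) := by ring
  rw [affineExp, norm_mul, Complex.norm_exp, Complex.re_mul_ofReal, sub_mul, sub_eq_neg_add,
    Real.exp_add, ← mul_assoc]
  gcongr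

lemma integrable_exp_mul_norm_leftCutoff_affineExp (hz : -β < z.re) :
    Integrable fun s => Real.exp (2 * β * s) * ‖leftCutoff (affineExp p q z) s‖ ^ 2 := by
  obtain ⟨σ, σ_gt, σ_lt⟩ := exists_between hz
  let C := ‖p‖ + ‖q‖ / (z.re - σ)
  have dominant : IntegrableOn (fun s => C ^ 2 * Real.exp ((2 * β + 2 * σ) * s)) (Set.Iic 0) :=
    (integrableOn_exp_mul_Iic (by linarith) 0).const_mul _
  have continuous_cutoff : Continuous (leftCutoff (affineExp p q z)) :=
    (contDiff_leftCutoff contDiff_affineExp).continuous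
  refine (dominant.integrable_indicator measurableSet_Iic).mono'
    (by fun_prop : Continuous _).aestronglyMeasurable (ae_of_all _ fun s => ?_)
  rw [Real.norm_of_nonneg (by positivity)]
  rcases le_or_gt s 0 with hs | hs
  · have norm_le : ‖leftCutoff (affineExp p q z) s‖ ≤ C * Real.exp (σ * s) := by
      simpa only [C, sub_sub_cancel] using
        norm_leftCutoff_le.trans (norm_affineExp_le (p := p) (q := q) (z := z) (sub_pos.2 σ_lt) hs)
    rw [Set.indicator_of_mem (Set.mem_Iic.2 hs)]
    calc Real.exp (2 * β * s) * ‖leftCutoff (affineExp p q z) s‖ ^ 2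
        ≤ Real.exp (2 * β * s) * (C * Real.exp (σ * s)) ^ 2 := by gcongr
      _ = C ^ 2 * Real.exp ((2 * β + 2 * σ) * s) := by
        rw [mul_pow, ← Real.exp_nat_mul, mul_left_comm, ← Real.exp_add]
        congr 2
        push_cast
        ring
  · rw [leftCutoff_of_nonneg hs.le, Set.indicator_of_notMem (Set.notMem_Iic.2 hs), norm_zero,
      zero_pow two_ne_zero, mul_zero]

end AffineExp

section EssentialSelfAdjointness

variable {n : ℕ} {c : ℝ} {z : ℂ}

lemma not_essentiallySelfAdjoint_T2op_of_root (hn : n ≠ 0)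
    (hz : (z ^ 2 + sectorConst n) ^ 2 - 4 * z ^ 2 + c = 0) (hzr : |z.re| < 2) :
    ¬EssentiallySelfAdjoint (T2op n c) := by
  intro h
  rw [abs_lt] at hzr
  have sectorConst_lt_two : sectorConst n < 2 := by
    rw [sectorConst]
    nlinarith [sq_nonneg ((n : ℝ) - 2)]
  have root : z ^ 4 + ((2 * sectorConst n - 4 : ℝ) : ℂ) * z ^ 2 +
      ((sectorConst n ^ 2 + c : ℝ) : ℂ) = 0 := by
    push_cast
    linear_combination hz
  obtain ⟨p, q, solution, form_ne_zero⟩ :=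
    exists_quarticForm_affineExp_ne_zero (by linarith) root (-2)
  have integrable {p q z : ℂ} (hz : -2 < z.re) :
      Integrable fun s => Real.exp (4 * s) * ‖leftCutoff (affineExp p q z) s‖ ^ 2 := by
    simpa only [show (2 * 2 : ℝ) = 4 by norm_num] using
      integrable_exp_mul_norm_leftCutoff_affineExp hz
  refine form_ne_zero (quarticForm_eq_zero_of_essentiallySelfAdjoint hn h contDiff_affineExp
    contDiff_affineExp (funext fun s => ?_) solution (integrable hzr.1)
    (integrable (by rw [Complex.neg_re]; linarith)) (by norm_num))
  rw [quarticOp_affineExp, root, zero_mul, mul_zero, zero_mul, add_zero, Pi.zero_apply]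

theorem SectorBound.of_essentiallySelfAdjoint_T2op (hn : n ≠ 0)
    (h : EssentiallySelfAdjoint (T2op n c)) : SectorBound (sectorConst n) c :=
  .of_forall_root fun _ hz => not_lt.1 fun hzr =>
    not_essentiallySelfAdjoint_T2op_of_root hn hz hzr h

lemma essentiallySelfAdjoint_T2op_iff_of_le_five (hn : n ≠ 0) (hn₅ : n ≤ 5) :
    EssentiallySelfAdjoint (T2op n c) ↔ 3 * ((n : ℝ) + 2) * (6 - n) ≤ c := by
  refine ⟨fun h => ?_, fun hc =>
    essentiallySelfAdjoint_T2op_of_sectorBound hn fun _ => sectorBound_of_le_five hn hn₅ hc⟩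
  have lt_sectorConst : -6 < sectorConst n := by
    linarith [neg_five_quarters_le_sectorConst hn₅]
  rw [← thirty_six_add_twelve_mul_sectorConst]
  exact (SectorBound.of_essentiallySelfAdjoint_T2op hn h).2.resolve_left lt_sectorConst.not_ge

lemma essentiallySelfAdjoint_T2op_iff_of_six_le (hn : 6 ≤ n) :
    EssentiallySelfAdjoint (T2op n c) ↔ -((n : ℝ) * (n + 4) * (n - 4) * (n - 8)) / 16 ≤ c := by
  have n_ne_zero : n ≠ 0 := by lia
  refine ⟨fun h => ?_, fun hc =>
    essentiallySelfAdjoint_T2op_of_sectorBound n_ne_zero fun _ => sectorBound_of_six_le hn hc⟩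
  rw [← neg_sq_sub_eight_mul_sectorConst]
  exact (SectorBound.of_essentiallySelfAdjoint_T2op n_ne_zero h).1

end EssentialSelfAdjointness

theorem stmt0_general (n : ℕ) (hn : n ≠ 0) (c : ℝ) :
    EssentiallySelfAdjoint (T2op n c) ↔
      ((n ≤ 5 → 3 * ((n : ℝ) + 2) * (6 - n) ≤ c) ∧
        (6 ≤ n → -((n : ℝ) * (n + 4) * (n - 4) * (n - 8)) / 16 ≤ c)) := by
  rcases le_or_gt n 5 with hn₅ | hn₆
  · rw [essentiallySelfAdjoint_T2op_iff_of_le_five hn hn₅]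
    exact ⟨fun h => ⟨fun _ => h, fun hn₆ => absurd hn₆ (by lia)⟩, fun h => h.1 hn₅⟩
  · rw [essentiallySelfAdjoint_T2op_iff_of_six_le hn₆]
    exact ⟨fun h => ⟨fun hn₅ => absurd hn₅ (by lia), fun _ => h⟩, fun h => h.2 hn₆⟩

theorem stmt0 (n : ℕ) (hn : 2 ≤ n) (c : ℝ) :
    EssentiallySelfAdjoint (T2op n c) ↔
      ((n ≤ 5 → 3 * ((n : ℝ) + 2) * (6 - n) ≤ c) ∧
        (6 ≤ n → -((n : ℝ) * (n + 4) * (n - 4) * (n - 8)) / 16 ≤ c)) :=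
  stmt0_general n (by lia) c
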